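/- For every integer N ≥ 3, the set F(N) = {x ∈ (0,1) irrational : a_i(x) ≤ N for all i ≥ 1} carries a Borel probability measure μ (i.e., μ(F(N)) = 1) for which there exist constants c > 0 and η > 0 such that |μ̂(t)| ≤ c·|t|^{−η} for all real t with |t| ≥ 1, where μ̂(t) = ∫ e^{−2πitx} dμ(x) (Kaufman's measure). -/

import Mathlib

open Filter MeasureTheory Topology
open scoped Classical

/-- The Gauss map `T x = 1/x mod 1`. -/
noncomputable def gaussMap (x : ℝ) : ℝ := Int.fract x⁻¹

/-- `cfa n x` is the partial quotient `a_{n+1}(x)` of the regular continued fraction expansion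
of `x`, generated by the Gauss map: `a_1(x) = ⌊1/x⌋` and `a_{k+1}(x) = a_k (T x)`. -/
noncomputable def cfa : ℕ → ℝ → ℕ
  | 0, x => ⌊x⁻¹⌋₊
  | n + 1, x => cfa n (gaussMap x)

/-!
Let the partial quotients be independent, with a law on `{1, 2, 3}` for which a cylinder whose
convergent has denominator `q` has probability `O(q^{-4/3})`, whereas its length is of order
`q^{-2}`. The resulting measure `μ` gives mass `O(r^{2/3})` to every interval of length `r`.

To estimate `∫ e^{iθx} dμ(x)`, split the unit interval into cylinders with denominators of order a
small power `Q` of `|θ|`. By self-similarity the integral is `∫ F dμ`, where `F` is the exponential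
sum of the phases `θ φ_v` weighted by the probabilities of the cylinders, and `φ_v` is the inverse
branch of an iterate of the Gauss map attached to the cylinder `v`. Restrict to words of the same
parity and expand `|F|²`. The difference of two distinct phases has derivative
`± θ (1 / (q + q' y)² - 1 / (p + p' y)²)`, which vanishes at most to first order, so the
off-diagonal terms are small in the mean over Lebesgue measure, and the diagonal ones are small
because each cylinder has small probability. Finally `|F|²` is Lipschitz with constant
`O(|θ| / Q²)`, far below `|θ|`, so it is almost constant at a scale at which the regularity of `μ`
permits replacing Lebesgue measure by `μ`; the exponent `2/3` exceeds what this exchange costs.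
-/

/-! ### The Gauss map and its inverse branches -/

theorem cfa_eq_floor_iterate_gaussMap (n : ℕ) (x : ℝ) : cfa n x = ⌊(gaussMap^[n] x)⁻¹⌋₊ := by
  induction n generalizing x with
  | zero => rfl
  | succ _ ih => exact ih (gaussMap x)

theorem irrational_of_iterate_gaussMap_pos {x : ℝ} (hx : ∀ n, 0 < gaussMap^[n] x) :
    Irrational x := by
  rintro ⟨q, rfl⟩
  set r : ℕ → ℚ := fun n => (fun p : ℚ => Int.fract p⁻¹)^[n] q
  have cast_r (n : ℕ) : (r n : ℝ) = gaussMap^[n] q :=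
    Function.Semiconj.iterate_right (f := ((↑) : ℚ → ℝ)) (gb := gaussMap)
      (fun p => by simp only [gaussMap, Rat.cast_fract, Rat.cast_inv]) n q
  have r_pos (n : ℕ) : 0 < r n := by exact_mod_cast (cast_r n).symm ▸ hx n
  have num_lt (n : ℕ) : (r (n + 1)).num < (r n).num := by
    simp only [r, Function.iterate_succ_apply']
    exact Rat.fract_inv_num_lt_num_of_pos (r_pos n)
  obtain ⟨n, hn⟩ := WellFounded.not_rel_apply_succ (r := (· < ·)) fun n => (r n).num.toNat
  exact hn <| (Int.toNat_lt_toNat (Rat.num_pos.2 (r_pos n))).2 (num_lt n)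

/-- The inverse branch of the Gauss map whose values have first partial quotient `d + 1`. The digits
are shifted so that an alphabet of `N` partial quotients is `Fin N`. -/
noncomputable def gaussBranch (d : ℕ) (y : ℝ) : ℝ := ((d : ℝ) + 1 + y)⁻¹

theorem gaussMap_gaussBranch (d : ℕ) {y : ℝ} (hy₀ : 0 ≤ y) (hy₁ : y < 1) :
    gaussMap (gaussBranch d y) = y := by
  rw [gaussMap, gaussBranch, inv_inv, Int.fract_eq_iff]
  exact ⟨hy₀, hy₁, d + 1, by push_cast; ring⟩

theorem floor_inv_gaussBranch (d : ℕ) {y : ℝ} (hy₀ : 0 ≤ y) (hy₁ : y < 1) :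
    ⌊(gaussBranch d y)⁻¹⌋₊ = d + 1 := by
  rw [gaussBranch, inv_inv, Nat.floor_eq_iff (by positivity)]
  push_cast
  constructor <;> linarith

theorem measurable_gaussBranch (d : ℕ) : Measurable (gaussBranch d) :=
  (measurable_id.const_add _).inv

theorem gaussBranch_nonneg (d : ℕ) {y : ℝ} (hy : 0 ≤ y) : 0 ≤ gaussBranch d y := by
  rw [gaussBranch]
  positivity

theorem gaussBranch_sub_gaussBranch (d e : ℕ) {x y : ℝ} (hx : 0 ≤ x) (hy : 0 ≤ y) :
    gaussBranch d x - gaussBranch e y =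
      ((e + y) - (d + x)) / ((d + 1 + x) * (e + 1 + y)) := by
  have hdx : (d : ℝ) + 1 + x ≠ 0 := by positivity
  have hey : (e : ℝ) + 1 + y ≠ 0 := by positivity
  rw [gaussBranch, gaussBranch]
  field_simp
  ring

theorem hasDerivAt_gaussBranch (d : ℕ) {y : ℝ} (hy : 0 ≤ y) :
    HasDerivAt (gaussBranch d) (-((d + 1 + y) ^ 2)⁻¹) y := by
  have h : (d : ℝ) + 1 + y ≠ 0 := by positivity
  exact (((hasDerivAt_id y).const_add ((d : ℝ) + 1)).fun_inv h).congr_deriv <| by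
    rw [neg_div, one_div, id]

/-- A compact subinterval of `(0, 1)` mapped into itself by the branches with digits `d < N`. -/
def cfInterval (N : ℕ) : Set ℝ := Set.Icc (1 / (N + 2)) ((N + 2) / (N + 3))

section CfInterval

variable {N : ℕ} {x y : ℝ}

theorem pos_of_mem_cfInterval (hx : x ∈ cfInterval N) : 0 < x :=
  lt_of_lt_of_le (by positivity) hx.1

theorem lt_one_of_mem_cfInterval (hx : x ∈ cfInterval N) : x < 1 :=
  hx.2.trans_lt <| by rw [div_lt_one (by positivity)]; linarith

theorem one_div_mem_cfInterval (N : ℕ) : (1 / (N + 2) : ℝ) ∈ cfInterval N := by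
  refine ⟨le_rfl, ?_⟩
  rw [div_le_div_iff₀ (by positivity) (by positivity)]
  nlinarith [(N.cast_nonneg : (0 : ℝ) ≤ N)]

theorem add_le_of_mem_cfInterval (d : Fin N) (hx : x ∈ cfInterval N) : (d : ℝ) + 1 + x ≤ N + 2 := by
  have hd : (d : ℝ) + 1 ≤ N := by exact_mod_cast d.isLt
  linarith [lt_one_of_mem_cfInterval hx]

theorem gaussBranch_mem_cfInterval (d : Fin N) (hx : x ∈ cfInterval N) :
    gaussBranch d x ∈ cfInterval N := by
  have hx₀ := pos_of_mem_cfInterval hx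
  rw [gaussBranch, inv_eq_one_div]
  refine ⟨one_div_le_one_div_of_le (by positivity) (add_le_of_mem_cfInterval d hx), ?_⟩
  rw [div_le_div_iff₀ (by positivity) (by positivity)]
  have h1 : 1 ≤ (N + 2) * x := by
    have := hx.1
    rw [div_le_iff₀ (by positivity)] at this
    linarith
  have h2 : 0 ≤ (N + 2 : ℝ) * d := by positivity
  linarith

theorem abs_gaussBranch_sub_le (d : ℕ) (hx : x ∈ cfInterval N) (hy : y ∈ cfInterval N) :
    |gaussBranch d x - gaussBranch d y| ≤ (1 + 1 / (N + 2) : ℝ)⁻¹ ^ 2 * |x - y| := by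
  have hx₀ := (pos_of_mem_cfInterval hx).le
  have hy₀ := (pos_of_mem_cfInterval hy).le
  rw [gaussBranch_sub_gaussBranch d d hx₀ hy₀, add_sub_add_left_eq_sub, abs_div, abs_sub_comm,
    abs_of_nonneg (by positivity : 0 ≤ ((d : ℝ) + 1 + x) * (d + 1 + y)), inv_pow,
    mul_comm _ |x - y|, sq, ← div_eq_mul_inv]
  have : (0 : ℝ) ≤ d := d.cast_nonneg
  gcongr |x - y| / (?_ * ?_)
  · linarith [hx.1]
  · linarith [hy.1]

theorem le_abs_gaussBranch_sub {d e : Fin N} (hde : d ≠ e) (hx : x ∈ cfInterval N)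
    (hy : y ∈ cfInterval N) : 1 / (N + 2 : ℝ) ^ 3 ≤ |gaussBranch d x - gaussBranch e y| := by
  have hx₀ := (pos_of_mem_cfInterval hx).le
  have hy₀ := (pos_of_mem_cfInterval hy).le
  have hsep : (1 : ℝ) ≤ |(e : ℝ) - d| := by
    exact_mod_cast Int.one_le_abs (sub_ne_zero.2 fun h => hde (Fin.ext (by omega)) :
      ((e : ℕ) : ℤ) - (d : ℕ) ≠ 0)
  have hxy : |x - y| ≤ 1 - 1 / (N + 2) := by
    have h1 := lt_one_of_mem_cfInterval hx
    have h2 := lt_one_of_mem_cfInterval hy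
    rw [abs_le]
    constructor <;> linarith [hx.1, hy.1]
  have hnum : 1 / (N + 2 : ℝ) ≤ |(e + y) - (d + x)| := by
    have := abs_sub_abs_le_abs_sub ((e : ℝ) - d) (x - y)
    rw [show (e + y : ℝ) - (d + x) = (e - d) - (x - y) by ring]
    linarith
  rw [gaussBranch_sub_gaussBranch d e hx₀ hy₀, abs_div,
    abs_of_nonneg (by positivity : 0 ≤ ((d : ℝ) + 1 + x) * (e + 1 + y))]
  calc 1 / (N + 2 : ℝ) ^ 3 = 1 / (N + 2) / ((N + 2) * (N + 2)) := by field_simp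
    _ ≤ |(e + y) - (d + x)| / ((d + 1 + x) * (e + 1 + y)) :=
      div_le_div₀ (abs_nonneg _) hnum (by positivity) <|
        mul_le_mul (add_le_of_mem_cfInterval d hx) (add_le_of_mem_cfInterval e hy) (by positivity)
          (by positivity)

end CfInterval

/-! ### The coding map -/

/-- The finite continued fraction with partial quotients `a i + 1` for `i < n`, its last tail being
replaced by `1 / (N + 2)`. -/
noncomputable def codeApprox {N : ℕ} : ℕ → (ℕ → Fin N) → ℝ
  | 0, _ => 1 / (N + 2)
  | n + 1, a => gaussBranch (a 0) (codeApprox n fun i => a (i + 1))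

/-- The number `[0; a 0 + 1, a 1 + 1, …]` coded by a sequence of digits. -/
noncomputable def code {N : ℕ} (a : ℕ → Fin N) : ℝ := limUnder atTop fun n => codeApprox n a

section Code

variable {N : ℕ}

theorem codeApprox_mem (n : ℕ) (a : ℕ → Fin N) : codeApprox n a ∈ cfInterval N := by
  induction n generalizing a with
  | zero => exact one_div_mem_cfInterval N
  | succ n ih => exact gaussBranch_mem_cfInterval _ (ih _)

theorem measurable_codeApprox (n : ℕ) : Measurable (codeApprox (N := N) n) := by
  induction n with
  | zero => exact measurable_const
  | succ n ih =>
    have hdigit : Measurable fun a : ℕ → Fin N => ((a 0 : ℕ) : ℝ) :=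
      (measurable_of_finite fun d : Fin N => ((d : ℕ) : ℝ)).comp (measurable_pi_apply 0)
    have hshift : Measurable fun (a : ℕ → Fin N) i => a (i + 1) :=
      measurable_pi_iff.2 fun i => measurable_pi_apply (i + 1)
    exact ((hdigit.add_const 1).add (ih.comp hshift)).inv

theorem dist_codeApprox_succ_le (n : ℕ) (a : ℕ → Fin N) :
    dist (codeApprox n a) (codeApprox (n + 1) a) ≤ ((1 + 1 / (N + 2) : ℝ)⁻¹ ^ 2) ^ n := by
  induction n generalizing a with
  | zero =>
    have h0 := codeApprox_mem 0 a
    have h1 := codeApprox_mem 1 a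
    rw [Real.dist_eq, pow_zero, abs_le]
    constructor <;> linarith [pos_of_mem_cfInterval h0, lt_one_of_mem_cfInterval h0,
      pos_of_mem_cfInterval h1, lt_one_of_mem_cfInterval h1]
  | succ n ih =>
    rw [pow_succ']
    refine (abs_gaussBranch_sub_le _ (codeApprox_mem _ _) (codeApprox_mem _ _)).trans ?_
    exact mul_le_mul_of_nonneg_left (ih fun i => a (i + 1)) (by positivity)

theorem tendsto_codeApprox (a : ℕ → Fin N) :
    Tendsto (fun n => codeApprox n a) atTop (𝓝 (code a)) := by
  refine (cauchySeq_of_le_geometric _ 1 ?_ fun n => by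
    simpa only [one_mul] using dist_codeApprox_succ_le n a).tendsto_limUnder
  have : (0 : ℝ) < 1 / (N + 2) := by positivity
  exact pow_lt_one₀ (by positivity) (inv_lt_one_of_one_lt₀ (by linarith)) two_ne_zero

theorem code_mem (a : ℕ → Fin N) : code a ∈ cfInterval N :=
  isClosed_Icc.mem_of_tendsto (tendsto_codeApprox a) (.of_forall fun n => codeApprox_mem n a)

theorem measurable_code : Measurable (code (N := N)) :=
  measurable_of_tendsto_metrizable measurable_codeApprox (tendsto_pi_nhds.2 tendsto_codeApprox)

theorem code_eq_gaussBranch (a : ℕ → Fin N) :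
    code a = gaussBranch (a 0) (code fun i => a (i + 1)) := by
  have htail := code_mem fun i => a (i + 1)
  refine tendsto_nhds_unique ((tendsto_add_atTop_iff_nat 1).2 (tendsto_codeApprox a)) ?_
  exact (hasDerivAt_gaussBranch _ (pos_of_mem_cfInterval htail).le).continuousAt.tendsto.comp
    (tendsto_codeApprox fun i => a (i + 1))

theorem iterate_gaussMap_code (n : ℕ) (a : ℕ → Fin N) :
    gaussMap^[n] (code a) = code fun i => a (i + n) := by
  induction n generalizing a with
  | zero => rfl
  | succ n ih =>
    have htail := code_mem fun i => a (i + 1)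
    rw [Function.iterate_succ_apply, code_eq_gaussBranch, gaussMap_gaussBranch _
      (pos_of_mem_cfInterval htail).le (lt_one_of_mem_cfInterval htail), ih]
    simp only [add_assoc]

theorem irrational_code (a : ℕ → Fin N) : Irrational (code a) :=
  irrational_of_iterate_gaussMap_pos fun n =>
    iterate_gaussMap_code n a ▸ pos_of_mem_cfInterval (code_mem _)

theorem cfa_code (n : ℕ) (a : ℕ → Fin N) : cfa n (code a) = a n + 1 := by
  have htail := code_mem fun i => a (i + 1 + n)
  rw [cfa_eq_floor_iterate_gaussMap, iterate_gaussMap_code, code_eq_gaussBranch,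
    floor_inv_gaussBranch _ (pos_of_mem_cfInterval htail).le (lt_one_of_mem_cfInterval htail),
    zero_add]

end Code

/-! ### Self-similar measures on continued fractions -/

/-- Prepend a term to a sequence. -/
def seqCons {X : Type*} (x : X) (a : ℕ → X) : ℕ → X
  | 0 => x
  | n + 1 => a n

section SeqCons

variable {X : Type*} [MeasurableSpace X]

theorem measurable_seqCons : Measurable fun p : X × (ℕ → X) => seqCons p.1 p.2 := by
  refine measurable_pi_iff.2 fun n => ?_
  cases n with
  | zero => exact measurable_fst
  | succ n => exact (measurable_pi_apply n).comp measurable_snd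

theorem map_seqCons_prod_infinitePi (ν : Measure X) [IsProbabilityMeasure ν] :
    (ν.prod (Measure.infinitePi fun _ : ℕ => ν)).map (fun p => seqCons p.1 p.2) =
      Measure.infinitePi fun _ : ℕ => ν := by
  refine Measure.eq_infinitePi _ fun s t ht => ?_
  set t' : ℕ → Set X := fun i => if i ∈ s then t i else Set.univ
  have ht' (i : ℕ) : MeasurableSet (t' i) := by
    simp only [t']
    split_ifs
    exacts [ht i, .univ]
  obtain ⟨n, hn⟩ := s.exists_nat_subset_range
  have hs : s ⊆ Finset.range (n + 1) := hn.trans (Finset.range_mono n.le_succ)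
  have pi_eq : (s : Set ℕ).pi t = (Finset.range (n + 1) : Set ℕ).pi t' := by
    ext a
    simp only [Set.mem_pi, Finset.mem_coe, t']
    refine ⟨fun h i _ => ?_, fun h i hi => by simpa only [if_pos hi] using h i (hs hi)⟩
    split_ifs with hi
    exacts [h i hi, Set.mem_univ _]
  have preimage_eq : (fun p : X × (ℕ → X) => seqCons p.1 p.2) ⁻¹'
      (Finset.range (n + 1) : Set ℕ).pi t' =
        t' 0 ×ˢ (Finset.range n : Set ℕ).pi fun i => t' (i + 1) := by
    ext p
    simp only [Set.mem_preimage, Set.mem_pi, Finset.mem_coe, Finset.mem_range, Set.mem_prod,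
      Nat.forall_lt_succ_left', seqCons]
  rw [pi_eq, Measure.map_apply measurable_seqCons
    (.pi (Finset.range (n + 1)).countable_toSet fun i _ => ht' i), preimage_eq, Measure.prod_prod,
    Measure.infinitePi_pi _ fun i _ => ht' (i + 1), mul_comm,
    ← Finset.prod_range_succ' (fun i => ν (t' i)), ← Finset.prod_subset hs]
  · exact Finset.prod_congr rfl fun i hi => by simp only [t', if_pos hi]
  · exact fun i _ hi => by simp only [t', if_neg hi, measure_univ]

end SeqCons

/-- The law of `[0; a 0 + 1, a 1 + 1, …]` for independent digits `a i` with law `ν`. -/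
noncomputable def cfMeasure {N : ℕ} (ν : Measure (Fin N)) [IsProbabilityMeasure ν] : Measure ℝ :=
  (Measure.infinitePi fun _ : ℕ => ν).map code

section CfMeasure

variable {N : ℕ} (ν : Measure (Fin N)) [IsProbabilityMeasure ν]

instance isProbabilityMeasure_cfMeasure : IsProbabilityMeasure (cfMeasure ν) :=
  Measure.isProbabilityMeasure_map measurable_code.aemeasurable

theorem ae_mem_cfInterval : ∀ᵐ y ∂cfMeasure ν, y ∈ cfInterval N :=
  (ae_map_iff (p := (· ∈ cfInterval N)) measurable_code.aemeasurable measurableSet_Icc).2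
    (.of_forall code_mem)

theorem cfMeasure_bounded_type {K : ℕ} (hNK : N ≤ K) :
    cfMeasure ν {x : ℝ | x ∈ Set.Ioo (0 : ℝ) 1 ∧ Irrational x ∧ ∀ i : ℕ, cfa i x ≤ K} = 1 := by
  refine le_antisymm prob_le_one
    (le_trans ?_ (Measure.le_map_apply measurable_code.aemeasurable _))
  rw [← measure_univ (μ := Measure.infinitePi fun _ : ℕ => ν)]
  refine measure_mono fun a _ => ⟨⟨pos_of_mem_cfInterval (code_mem a),
    lt_one_of_mem_cfInterval (code_mem a)⟩, irrational_code a, fun i => ?_⟩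
  rw [cfa_code]
  exact (a i).isLt.trans_le hNK

theorem integral_cfMeasure_eq_sum {E : Type*} [NormedAddCommGroup E] [NormedSpace ℝ E]
    [CompleteSpace E] {f : ℝ → E} (hfm : StronglyMeasurable f) (hf : Integrable f (cfMeasure ν)) :
    ∫ y, f y ∂cfMeasure ν = ∑ d, ν.real {d} • ∫ y, f (gaussBranch d y) ∂cfMeasure ν := by
  set P := Measure.infinitePi fun _ : ℕ => ν
  have code_seqCons (p : Fin N × (ℕ → Fin N)) :
      code (seqCons p.1 p.2) = gaussBranch p.1 (code p.2) := code_eq_gaussBranch _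
  have hmeas : Measurable fun p : Fin N × (ℕ → Fin N) => code (seqCons p.1 p.2) :=
    measurable_code.comp measurable_seqCons
  have map_eq : cfMeasure ν = (ν.prod P).map fun p => code (seqCons p.1 p.2) := by
    rw [cfMeasure, ← map_seqCons_prod_infinitePi,
      Measure.map_map measurable_code measurable_seqCons]
    rfl
  have hfP : Integrable (fun p : Fin N × (ℕ → Fin N) => f (gaussBranch p.1 (code p.2)))
      (ν.prod P) := by
    simp only [← code_seqCons]
    exact (map_eq ▸ hf).comp_measurable hmeas
  calc ∫ y, f y ∂cfMeasure ν = ∫ p, f (gaussBranch p.1 (code p.2)) ∂ν.prod P := by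
        rw [map_eq, integral_map hmeas.aemeasurable hfm.aestronglyMeasurable]
        simp only [code_seqCons]
    _ = ∑ d, ν.real {d} • ∫ a, f (gaussBranch d (code a)) ∂P := by
        rw [integral_prod _ hfP, integral_fintype hfP.integral_prod_left]
    _ = ∑ d, ν.real {d} • ∫ y, f (gaussBranch d y) ∂cfMeasure ν := by
        refine Finset.sum_congr rfl fun d _ => ?_
        rw [cfMeasure, integral_map (f := fun y => f (gaussBranch d y)) measurable_code.aemeasurable
          (hfm.comp_measurable (measurable_gaussBranch d)).aestronglyMeasurable]

end CfMeasure

/-! ### Digit words -/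

/-- Finite words of digits. They are stored in reverse order, the head being the digit read last, so
that consing a digit refines a cylinder. -/
abbrev DigitWord (N : ℕ) := List (Fin N)

namespace DigitWord

variable {N : ℕ}

mutual

/-- The denominator `q_n` of the convergent `[0; a_1, …, a_n]` attached to a word of length `n`. -/
def den : DigitWord N → ℕ
  | [] => 1
  | d :: w => (d + 1) * den w + prevDen w

/-- The denominator `q_{n-1}` of the convergent before the one attached to a word of length `n`. -/
def prevDen : DigitWord N → ℕ
  | [] => 0
  | _ :: w => den w

end

/-- The inverse branch of an iterate of the Gauss map attached to a word, namely
`y ↦ [0; a_1, …, a_n + y]`. -/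
noncomputable def toMap : DigitWord N → ℝ → ℝ
  | [], y => y
  | d :: w, y => toMap w (gaussBranch d y)

/-- The denominator `q_n + q_{n-1} y` of the Möbius map `toMap w`. -/
noncomputable def denAt (w : DigitWord N) (y : ℝ) : ℝ := den w + prevDen w * y

/-- The probability of a word of independent digits with law `ν`. -/
noncomputable def prob (ν : Measure (Fin N)) (w : DigitWord N) : ℝ :=
  (w.map fun d => ν.real {d}).prod

theorem toMap_nil : toMap ([] : DigitWord N) = id := rfl

theorem prob_nil (ν : Measure (Fin N)) : prob ν [] = 1 := rfl

theorem prob_cons (ν : Measure (Fin N)) (d : Fin N) (w : DigitWord N) :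
    prob ν (d :: w) = ν.real {d} * prob ν w := List.prod_cons

theorem prob_nonneg (ν : Measure (Fin N)) (w : DigitWord N) : 0 ≤ prob ν w :=
  List.prod_nonneg <| by simp only [List.mem_map, forall_exists_index, and_imp,
    forall_apply_eq_imp_iff₂, measureReal_nonneg, implies_true]

theorem one_le_den (w : DigitWord N) : 1 ≤ den w := by
  induction w with
  | nil => exact le_rfl
  | cons d w ih => exact ih.trans <| le_add_right <| Nat.le_mul_of_pos_left _ d.val.succ_pos

theorem prevDen_le_den (w : DigitWord N) : prevDen w ≤ den w := by
  cases w with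
  | nil => exact Nat.zero_le _
  | cons d w => exact le_add_right <| Nat.le_mul_of_pos_left _ d.val.succ_pos

theorem den_cons_le (d : Fin N) (w : DigitWord N) : den (d :: w) ≤ (N + 1) * den w := by
  have := prevDen_le_den w
  have : (d + 1) * den w ≤ N * den w := Nat.mul_le_mul_right _ d.isLt
  simp only [den]
  linarith

theorem length_le_den (w : DigitWord N) : w.length ≤ den w := by
  induction w with
  | nil => exact Nat.zero_le _
  | cons d w ih =>
    have hd : den w ≤ (d + 1) * den w := Nat.le_mul_of_pos_left _ d.val.succ_pos
    cases w with
    | nil => exact le_add_right hd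
    | cons e w => exact add_le_add (ih.trans hd) (one_le_den w)

theorem den_le_denAt (w : DigitWord N) {y : ℝ} (hy : 0 ≤ y) : den w ≤ denAt w y :=
  le_add_of_nonneg_right (by positivity)

theorem denAt_pos (w : DigitWord N) {y : ℝ} (hy : 0 ≤ y) : 0 < denAt w y :=
  (Nat.cast_pos.2 (one_le_den w)).trans_le (den_le_denAt w hy)

theorem denAt_le (w : DigitWord N) {y b : ℝ} (hy : 0 ≤ y) (hyb : y ≤ b) :
    denAt w y ≤ (1 + b) * den w := by
  have : (prevDen w : ℝ) * y ≤ den w * b :=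
    mul_le_mul (Nat.cast_le.2 (prevDen_le_den w)) hyb hy (Nat.cast_nonneg _)
  rw [denAt]
  linarith

theorem nonneg_of_prob_le {ν : Measure (Fin N)} {C s : ℝ}
    (hprob : ∀ w : DigitWord N, prob ν w ≤ C * (den w : ℝ) ^ s) : 0 ≤ C :=
  zero_le_one.trans <| by simpa [prob_nil, den] using hprob []

theorem prob_le_mul_rpow {ν : Measure (Fin N)} {C s : ℝ} (hs : 0 ≤ s)
    (hprob : ∀ w : DigitWord N, prob ν w ≤ C * (den w : ℝ) ^ (-(2 * s))) {A : ℝ} {w : DigitWord N}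
    (hw : 1 ≤ A * (den w : ℝ) ^ 2) : prob ν w ≤ C * A ^ s := by
  have hC := nonneg_of_prob_le hprob
  have hq : (0 : ℝ) < den w := Nat.cast_pos.2 (one_le_den w)
  calc prob ν w ≤ C * (((den w : ℝ) ^ 2)⁻¹) ^ s := by
        rw [Real.inv_rpow (by positivity), ← Real.rpow_natCast, ← Real.rpow_mul hq.le,
          ← Real.rpow_neg hq.le]
        exact_mod_cast hprob w
    _ ≤ C * A ^ s := by
        gcongr
        rwa [inv_le_iff_one_le_mul₀ (by positivity)]

theorem denAt_gaussBranch (d : Fin N) (w : DigitWord N) {y : ℝ} (hy : 0 ≤ y) :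
    denAt w (gaussBranch d y) = denAt (d :: w) y / (d + 1 + y) := by
  have : (d : ℝ) + 1 + y ≠ 0 := by positivity
  simp only [denAt, gaussBranch, den, prevDen]
  push_cast
  field_simp
  ring

theorem toMap_sub_toMap (w : DigitWord N) {x y : ℝ} (hx : 0 ≤ x) (hy : 0 ≤ y) :
    toMap w x - toMap w y = (-1) ^ w.length * (x - y) / (denAt w x * denAt w y) := by
  induction w generalizing x y with
  | nil => norm_num [toMap, denAt, den, prevDen]
  | cons d w ih =>
    have hdx : (d : ℝ) + 1 + x ≠ 0 := by positivity
    have hdy : (d : ℝ) + 1 + y ≠ 0 := by positivity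
    have hqx := (denAt_pos (d :: w) hx).ne'
    have hqy := (denAt_pos (d :: w) hy).ne'
    rw [toMap, toMap, ih (gaussBranch_nonneg d hx) (gaussBranch_nonneg d hy),
      gaussBranch_sub_gaussBranch d d hx hy, denAt_gaussBranch d w hx, denAt_gaussBranch d w hy,
      List.length_cons, pow_succ]
    field_simp
    ring

theorem abs_toMap_sub_toMap (w : DigitWord N) {x y : ℝ} (hx : 0 ≤ x) (hy : 0 ≤ y) :
    |toMap w x - toMap w y| = |x - y| / (denAt w x * denAt w y) := by
  rw [toMap_sub_toMap w hx hy, abs_div, abs_mul, abs_pow, abs_neg, abs_one, one_pow, one_mul,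
    abs_of_pos (mul_pos (denAt_pos w hx) (denAt_pos w hy))]

theorem hasDerivAt_toMap (w : DigitWord N) {y : ℝ} (hy : 0 ≤ y) :
    HasDerivAt (toMap w) ((-1) ^ w.length / denAt w y ^ 2) y := by
  induction w generalizing y with
  | nil =>
    refine (hasDerivAt_id y).congr_deriv ?_
    norm_num [denAt, den, prevDen]
  | cons d w ih =>
    have hdy : (d : ℝ) + 1 + y ≠ 0 := by positivity
    have hqy := (denAt_pos (d :: w) hy).ne'
    refine ((ih (gaussBranch_nonneg d hy)).comp y (hasDerivAt_gaussBranch d hy)).congr_deriv ?_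
    rw [denAt_gaussBranch d w hy, List.length_cons, pow_succ]
    field_simp
    ring

theorem measurable_toMap (w : DigitWord N) : Measurable (toMap w) := by
  induction w with
  | nil => exact measurable_id
  | cons d w ih => exact ih.comp (measurable_gaussBranch d)

theorem eq_nil_of_prevDen_eq_zero {w : DigitWord N} (h : prevDen w = 0) : w = [] := by
  cases w with
  | nil => rfl
  | cons d w => exact absurd h (Nat.one_le_iff_ne_zero.1 (one_le_den w))

theorem length_eq_one_of_prevDen_eq_den {w : DigitWord N} (h : prevDen w = den w) :
    w.length = 1 := by
  cases w with
  | nil => exact absurd h zero_ne_one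
  | cons d w =>
    have hw : prevDen w = 0 := by
      simp only [prevDen, den] at h
      linarith [Nat.zero_le (d * den w)]
    rw [eq_nil_of_prevDen_eq_zero hw, List.length_singleton]

theorem le_of_den_cons_eq {d e : Fin N} {w v : DigitWord N} (h : den (d :: w) = den (e :: v))
    (hden : den w = den v) (hpar : Even w.length ↔ Even v.length) : e ≤ d := by
  by_contra! hde
  have hmul : (d + 2) * den w ≤ (e + 1) * den w := Nat.mul_le_mul_right _ (by omega)
  have hw := prevDen_le_den w
  simp only [den, ← hden] at h
  have hv : v = [] := eq_nil_of_prevDen_eq_zero (by linarith)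
  have hw : w.length = 1 := length_eq_one_of_prevDen_eq_den (by linarith)
  simp [hv, hw] at hpar

/-- The ambiguity `[0; …, a, 1] = [0; …, a + 1]` of finite continued fractions is resolved by the
parity of the length. -/
theorem eq_of_den_eq {w v : DigitWord N} (hden : den w = den v) (hprev : prevDen w = prevDen v)
    (hpar : Even w.length ↔ Even v.length) : w = v := by
  induction w generalizing v with
  | nil => exact (eq_nil_of_prevDen_eq_zero hprev.symm).symm
  | cons d w ih =>
    cases v with
    | nil => exact eq_nil_of_prevDen_eq_zero hprev
    | cons e v =>
      simp only [List.length_cons, Nat.even_add_one, not_iff_not] at hpar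
      obtain rfl : d = e := le_antisymm
        (le_of_den_cons_eq hden.symm (Eq.symm hprev) hpar.symm) (le_of_den_cons_eq hden hprev hpar)
      simp only [prevDen] at hprev
      simp only [den, hprev, add_right_inj] at hden
      rw [ih hprev hden hpar]

end DigitWord

/-! ### Cylinders and the Frostman property -/

section Cylinders

open DigitWord

variable {N : ℕ} (ν : Measure (Fin N)) [IsProbabilityMeasure ν]

theorem prob_smul_integral_toMap {E : Type*} [NormedAddCommGroup E] [NormedSpace ℝ E]
    [CompleteSpace E] {f : ℝ → E} (hf : StronglyMeasurable f) {C : ℝ} (hC : ∀ x, ‖f x‖ ≤ C)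
    (w : DigitWord N) :
    prob ν w • ∫ y, f (toMap w y) ∂cfMeasure ν =
      ∑ d, prob ν (d :: w) • ∫ y, f (toMap (d :: w) y) ∂cfMeasure ν := by
  have hfw : StronglyMeasurable fun y => f (toMap w y) := hf.comp_measurable (measurable_toMap w)
  have hint : Integrable (fun y => f (toMap w y)) (cfMeasure ν) :=
    .of_bound hfw.aestronglyMeasurable C (.of_forall fun y => hC _)
  rw [integral_cfMeasure_eq_sum ν hfw hint, Finset.smul_sum]
  simp only [smul_smul, prob_cons, mul_comm (prob ν w), toMap]

theorem prob_mul_measureReal_preimage_toMap {I : Set ℝ} (hI : MeasurableSet I) (w : DigitWord N) :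
    prob ν w * (cfMeasure ν).real (toMap w ⁻¹' I) =
      ∑ d, prob ν (d :: w) * (cfMeasure ν).real (toMap (d :: w) ⁻¹' I) := by
  have integral_eq (v : DigitWord N) :
      ∫ y, I.indicator (1 : ℝ → ℝ) (toMap v y) ∂cfMeasure ν = (cfMeasure ν).real (toMap v ⁻¹' I) :=
    integral_indicator_one (measurable_toMap v hI)
  simpa only [integral_eq, smul_eq_mul] using prob_smul_integral_toMap ν
    (f := I.indicator 1) (stronglyMeasurable_one.indicator hI) (C := 1)
    (fun x => (norm_indicator_le_norm_self (1 : ℝ → ℝ) x).trans_eq norm_one) w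

theorem le_abs_toMap_cons_sub {d e : Fin N} (hde : d ≠ e) (w : DigitWord N) {x y : ℝ}
    (hx : x ∈ cfInterval N) (hy : y ∈ cfInterval N) :
    1 / (4 * (N + 2) ^ 3 * (den w : ℝ) ^ 2) ≤ |toMap (d :: w) x - toMap (e :: w) y| := by
  have hdx := gaussBranch_mem_cfInterval d hx
  have hey := gaussBranch_mem_cfInterval e hy
  have hdx₀ := (pos_of_mem_cfInterval hdx).le
  have hey₀ := (pos_of_mem_cfInterval hey).le
  have hqx := denAt_le w hdx₀ (lt_one_of_mem_cfInterval hdx).le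
  have hqy := denAt_le w hey₀ (lt_one_of_mem_cfInterval hey).le
  rw [toMap, toMap, abs_toMap_sub_toMap w hdx₀ hey₀]
  calc 1 / (4 * (N + 2) ^ 3 * (den w : ℝ) ^ 2)
      = 1 / (N + 2) ^ 3 / (((1 + 1) * den w) * ((1 + 1) * den w)) := by field_simp; norm_num
    _ ≤ |gaussBranch d x - gaussBranch e y| /
          (denAt w (gaussBranch d x) * denAt w (gaussBranch e y)) :=
      div_le_div₀ (abs_nonneg _) (le_abs_gaussBranch_sub hde hx hy)
        (mul_pos (denAt_pos w hdx₀) (denAt_pos w hey₀))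
        (mul_le_mul hqx hqy (denAt_pos w hey₀).le (by positivity))

theorem exists_mem_cfInterval_of_measureReal_ne_zero {A : Set ℝ} (hA : (cfMeasure ν).real A ≠ 0) :
    ∃ y ∈ cfInterval N, y ∈ A := by
  have hfreq : ∃ᵐ y ∂cfMeasure ν, y ∈ A :=
    frequently_ae_mem_iff.2 fun h => hA (by rw [Measure.real, h, ENNReal.toReal_zero])
  obtain ⟨y, hyA, hy⟩ := (hfreq.and_eventually (ae_mem_cfInterval ν)).exists
  exact ⟨y, hy, hyA⟩

theorem measureReal_preimage_toMap_cons_eq_zero {I : Set ℝ} {r : ℝ}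
    (hdiam : ∀ x ∈ I, ∀ y ∈ I, |x - y| ≤ r) {w : DigitWord N}
    (hw : 4 * (N + 2) ^ 3 * r * (den w : ℝ) ^ 2 < 1) {d e : Fin N} (hde : d ≠ e)
    (hd : (cfMeasure ν).real (toMap (d :: w) ⁻¹' I) ≠ 0) :
    (cfMeasure ν).real (toMap (e :: w) ⁻¹' I) = 0 := by
  by_contra he
  obtain ⟨x, hx, hxI⟩ := exists_mem_cfInterval_of_measureReal_ne_zero ν hd
  obtain ⟨y, hy, hyI⟩ := exists_mem_cfInterval_of_measureReal_ne_zero ν he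
  have hq : (0 : ℝ) < den w := Nat.cast_pos.2 (one_le_den w)
  have hle := (le_abs_toMap_cons_sub hde w hx hy).trans (hdiam _ hxI _ hyI)
  rw [div_le_iff₀ (by positivity)] at hle
  linarith

variable {ν} {C s : ℝ} (hs : 0 ≤ s)
  (hprob : ∀ w : DigitWord N, prob ν w ≤ C * (den w : ℝ) ^ (-(2 * s)))

include hs hprob

theorem prob_mul_measureReal_preimage_toMap_le {I : Set ℝ} (hI : MeasurableSet I) {r : ℝ}
    (hr : 0 < r) (hdiam : ∀ x ∈ I, ∀ y ∈ I, |x - y| ≤ r) (n : ℕ) (w : DigitWord N)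
    (hn : 1 ≤ 4 * (N + 2) ^ 3 * r * (n + w.length)) :
    prob ν w * (cfMeasure ν).real (toMap w ⁻¹' I) ≤ C * (4 * (N + 2) ^ 3 * r) ^ s := by
  have of_large_den {w : DigitWord N} (hw : 1 ≤ 4 * (N + 2) ^ 3 * r * (den w : ℝ) ^ 2) :
      prob ν w * (cfMeasure ν).real (toMap w ⁻¹' I) ≤ C * (4 * (N + 2) ^ 3 * r) ^ s :=
    (mul_le_of_le_one_right (prob_nonneg ν w) measureReal_le_one).trans <|
      prob_le_mul_rpow hs hprob hw
  induction n generalizing w with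
  | zero =>
    have hlen : (w.length : ℝ) ≤ (den w : ℝ) ^ 2 := by
      exact_mod_cast (length_le_den w).trans (Nat.le_self_pow two_ne_zero _)
    refine of_large_den (hn.trans ?_)
    rw [Nat.cast_zero, zero_add]
    gcongr
  | succ n ih =>
    rcases le_or_gt 1 (4 * (N + 2) ^ 3 * r * (den w : ℝ) ^ 2) with hw | hw
    · exact of_large_den hw
    have hcons (d : Fin N) := ih (d :: w) <| hn.trans_eq <| by push_cast [List.length_cons]; ring
    rw [prob_mul_measureReal_preimage_toMap ν hI]
    by_cases h : ∃ d, (cfMeasure ν).real (toMap (d :: w) ⁻¹' I) ≠ 0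
    · obtain ⟨d, hd⟩ := h
      rw [Finset.sum_eq_single d (fun e _ he => by
        rw [measureReal_preimage_toMap_cons_eq_zero ν hdiam hw he.symm hd, mul_zero])
        fun h => absurd (Finset.mem_univ d) h]
      exact hcons d
    · push Not at h
      have hC := nonneg_of_prob_le hprob
      simp only [h, mul_zero, Finset.sum_const_zero]
      positivity

theorem cfMeasure_real_le_rpow {I : Set ℝ} (hI : MeasurableSet I) {r : ℝ} (hr : 0 < r)
    (hdiam : ∀ x ∈ I, ∀ y ∈ I, |x - y| ≤ r) :
    (cfMeasure ν).real I ≤ C * (4 * (N + 2) ^ 3 * r) ^ s := by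
  obtain ⟨n, hn⟩ := exists_nat_ge (4 * (N + 2) ^ 3 * r)⁻¹
  have := prob_mul_measureReal_preimage_toMap_le hs hprob hI hr hdiam n [] <| by
    rw [inv_le_iff_one_le_mul₀' (by positivity)] at hn
    simpa using hn
  simpa only [prob_nil, toMap_nil, one_mul, Set.preimage_id] using this

end Cylinders

/-! ### Subdivisions -/

/-- The cylinders of the words in `W` partition the cylinder of `w`. Rather than in terms of point
sets, this is expressed by the additivity of functions of words. -/
structure IsSubdivision {N : ℕ} (w : DigitWord N) (W : Finset (DigitWord N)) : Prop where
  suffix : ∀ v ∈ W, w <:+ v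
  eq_sum : ∀ F : DigitWord N → ℂ, (∀ u, F u = ∑ d, F (d :: u)) → F w = ∑ v ∈ W, F v

namespace IsSubdivision

open DigitWord

variable {N : ℕ}

theorem singleton (w : DigitWord N) : IsSubdivision w {w} where
  suffix _ hv := Finset.mem_singleton.1 hv ▸ List.suffix_rfl
  eq_sum F _ := (Finset.sum_singleton F w).symm

theorem biUnion_cons {w : DigitWord N} {W : Fin N → Finset (DigitWord N)}
    (hW : ∀ d, IsSubdivision (d :: w) (W d)) : IsSubdivision w (Finset.univ.biUnion W) where
  suffix v hv := by
    obtain ⟨d, -, hvd⟩ := Finset.mem_biUnion.1 hv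
    exact (List.suffix_cons d w).trans ((hW d).suffix v hvd)
  eq_sum F hF := by
    rw [hF w, Finset.sum_biUnion]
    · exact Finset.sum_congr rfl fun d _ => (hW d).eq_sum F hF
    intro d _ e _ hde
    refine Finset.disjoint_left.2 fun v hvd hve => hde ?_
    have hsuffix : d :: w <:+ e :: w := List.suffix_of_suffix_length_le ((hW d).suffix v hvd)
      ((hW e).suffix v hve) (by simp only [List.length_cons, le_refl])
    exact (List.cons.inj (hsuffix.eq_of_length (by simp only [List.length_cons]))).1

theorem exists_den_mem_Icc {Q : ℝ} (n : ℕ) (w : DigitWord N) (hw : den w ≤ (N + 1) * Q)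
    (hn : Q ≤ n + w.length) :
    ∃ W, IsSubdivision w W ∧ ∀ v ∈ W, (den v : ℝ) ∈ Set.Icc Q ((N + 1) * Q) := by
  have of_le_den {w : DigitWord N} (hw : den w ≤ (N + 1) * Q) (hQ : Q ≤ den w) :
      ∃ W, IsSubdivision w W ∧ ∀ v ∈ W, (den v : ℝ) ∈ Set.Icc Q ((N + 1) * Q) :=
    ⟨{w}, singleton w, fun v hv => Finset.mem_singleton.1 hv ▸ ⟨hQ, hw⟩⟩
  induction n generalizing w with
  | zero =>
    have hlen : (w.length : ℝ) ≤ den w := Nat.cast_le.2 (length_le_den w)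
    exact of_le_den hw (by rw [Nat.cast_zero, zero_add] at hn; exact hn.trans hlen)
  | succ n ih =>
    rcases le_or_gt Q (den w) with hQ | hQ
    · exact of_le_den hw hQ
    have hcons (d : Fin N) : (den (d :: w) : ℝ) ≤ (N + 1) * Q :=
      calc (den (d :: w) : ℝ) ≤ (N + 1) * den w := by exact_mod_cast den_cons_le d w
        _ ≤ (N + 1) * Q := by gcongr
    choose W hW hden using fun d => ih (d :: w) (hcons d) <| hn.trans_eq <| by
      push_cast [List.length_cons]
      ring
    refine ⟨_, biUnion_cons hW, fun v hv => ?_⟩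
    obtain ⟨d, -, hvd⟩ := Finset.mem_biUnion.1 hv
    exact hden d v hvd

section Integral

variable {w : DigitWord N} {W : Finset (DigitWord N)} (hW : IsSubdivision w W)
  (ν : Measure (Fin N)) [IsProbabilityMeasure ν]

include hW

theorem prob_mul_integral_eq_sum {f : ℝ → ℂ} (hf : StronglyMeasurable f) {C : ℝ}
    (hC : ∀ x, ‖f x‖ ≤ C) :
    prob ν w * ∫ y, f (toMap w y) ∂cfMeasure ν =
      ∑ v ∈ W, prob ν v * ∫ y, f (toMap v y) ∂cfMeasure ν :=
  hW.eq_sum (fun v => prob ν v * ∫ y, f (toMap v y) ∂cfMeasure ν) fun u => by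
    simpa only [Complex.real_smul] using prob_smul_integral_toMap ν hf hC u

theorem sum_prob : ∑ v ∈ W, prob ν v = prob ν w := by
  have := hW.prob_mul_integral_eq_sum ν stronglyMeasurable_one (C := 1) fun _ => norm_one.le
  simp only [Pi.one_apply, integral_const, probReal_univ, one_smul, mul_one] at this
  exact_mod_cast this.symm

end Integral

end IsSubdivision

/-! ### Oscillatory integrals -/

/-- Integration by parts with an approximate inverse `M` of the phase derivative: when `ψ'` vanishes
somewhere, a regularisation of `1 / ψ'` still bounds the integral. -/
theorem norm_integral_cexp_mul_I_le {ψ ψ' M M' h : ℝ → ℝ} {a b : ℝ} (hab : a ≤ b)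
    (hψ : ∀ y ∈ Set.Icc a b, HasDerivAt ψ (ψ' y) y) (hψ' : ContinuousOn ψ' (Set.Icc a b))
    (hM : ∀ y ∈ Set.Icc a b, HasDerivAt M (M' y) y) (hM' : ContinuousOn M' (Set.Icc a b))
    (hh : IntervalIntegrable h volume a b)
    (hMh : ∀ y ∈ Set.Icc a b, |1 - M y * ψ' y| + |M' y| ≤ h y) :
    ‖∫ y in a..b, Complex.exp (ψ y * Complex.I)‖ ≤ |M a| + |M b| + ∫ y in a..b, h y := by
  set V : ℝ → ℂ := fun y => Complex.exp (ψ y * Complex.I) with hV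
  have norm_V (y : ℝ) : ‖V y‖ = 1 := Complex.norm_exp_ofReal_mul_I _
  set R : ℝ → ℂ := fun y => ((1 - M y * ψ' y : ℝ) + Complex.I * M' y) * V y with hR
  have hMV : ∀ y ∈ Set.Icc a b, HasDerivAt (fun y => (M y : ℂ) * V y)
      (Complex.I * (V y - R y)) y := fun y hy => by
    refine ((hM y hy).ofReal_comp.mul
      ((hψ y hy).ofReal_comp.mul_const Complex.I).cexp).congr_deriv ?_
    simp only [hR, hV, Complex.ofReal_sub, Complex.ofReal_one, Complex.ofReal_mul]
    linear_combination ((M' y : ℂ) * Complex.exp (ψ y * Complex.I)) * Complex.I_mul_I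
  have hMc : ContinuousOn M (Set.Icc a b) := fun y hy => (hM y hy).continuousAt.continuousWithinAt
  have hψc : ContinuousOn ψ (Set.Icc a b) := fun y hy => (hψ y hy).continuousAt.continuousWithinAt
  have hVc : ContinuousOn V (Set.Icc a b) := by fun_prop
  have hRc : ContinuousOn R (Set.Icc a b) := by fun_prop
  rw [← Set.uIcc_of_le hab] at hMV hVc hRc
  have hparts : (∫ y in a..b, V y) = (∫ y in a..b, R y) - Complex.I * (M b * V b - M a * V a) := by
    rw [← intervalIntegral.integral_eq_sub_of_hasDerivAt hMV
      ((continuousOn_const.mul (hVc.sub hRc)).intervalIntegrable),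
      intervalIntegral.integral_const_mul,
      intervalIntegral.integral_sub hVc.intervalIntegrable hRc.intervalIntegrable]
    linear_combination ((∫ y in a..b, V y) - ∫ y in a..b, R y) * Complex.I_mul_I
  have hRint : ‖∫ y in a..b, R y‖ ≤ ∫ y in a..b, h y := by
    refine intervalIntegral.norm_integral_le_of_norm_le hab (Eventually.of_forall fun y hy => ?_) hh
    rw [hR, norm_mul, norm_V, mul_one]
    refine ((norm_add_le _ _).trans_eq ?_).trans (hMh y ⟨hy.1.le, hy.2⟩)
    simp only [norm_mul, Complex.norm_I, one_mul, Complex.norm_real, Real.norm_eq_abs]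
  have norm_boundary : ‖Complex.I * (M b * V b - M a * V a)‖ ≤ |M b| + |M a| := by
    rw [norm_mul, Complex.norm_I, one_mul]
    refine (norm_sub_le _ _).trans_eq ?_
    simp only [norm_mul, norm_V, Complex.norm_real, Real.norm_eq_abs, mul_one]
  rw [hparts]
  linarith [norm_sub_le (∫ y in a..b, R y) (Complex.I * (M b * V b - M a * V a))]

theorem abs_mul_integral_inv_sq_add_sq_le (A B a b : ℝ) {κ : ℝ} (hκ : 0 < κ) :
    |B| * ∫ y in a..b, ((A + B * y) ^ 2 + κ ^ 2)⁻¹ ≤ Real.pi / κ := by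
  have hpos (y : ℝ) : 0 < (A + B * y) ^ 2 + κ ^ 2 := by positivity
  have hcont : Continuous fun y : ℝ => B * ((A + B * y) ^ 2 + κ ^ 2)⁻¹ :=
    continuous_const.mul (Continuous.inv₀ (by fun_prop) fun y => (hpos y).ne')
  have hderiv (y : ℝ) : HasDerivAt (fun y => Real.arctan ((A + B * y) / κ) / κ)
      (B * ((A + B * y) ^ 2 + κ ^ 2)⁻¹) y := by
    have hlin : HasDerivAt (fun y : ℝ => (A + B * y) / κ) (B / κ) y := by
      simpa using (((hasDerivAt_id y).const_mul B).const_add A).div_const κ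
    refine (hlin.arctan.div_const κ).congr_deriv ?_
    have := hpos y
    field_simp
    ring
  have hint := intervalIntegral.integral_eq_sub_of_hasDerivAt (fun y _ => hderiv y)
    (hcont.intervalIntegrable a b)
  rw [intervalIntegral.integral_const_mul, ← sub_div] at hint
  calc |B| * ∫ y in a..b, ((A + B * y) ^ 2 + κ ^ 2)⁻¹
      ≤ |B * ∫ y in a..b, ((A + B * y) ^ 2 + κ ^ 2)⁻¹| := by
        rw [abs_mul]
        exact mul_le_mul_of_nonneg_left (le_abs_self _) (abs_nonneg B)
    _ ≤ Real.pi / κ := by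
        rw [hint, abs_div, abs_of_pos hκ]
        gcongr
        have := Real.arctan_mem_Ioo ((A + B * a) / κ)
        have := Real.arctan_mem_Ioo ((A + B * b) / κ)
        simp only [Set.mem_Ioo] at *
        exact abs_le.2 ⟨by linarith, by linarith⟩

/-- A regularisation of `x⁻¹` at scale `κ`. -/
noncomputable def regInv (κ x : ℝ) : ℝ := x / (x ^ 2 + κ ^ 2)

theorem abs_regInv_mul_le {κ x g : ℝ} (hκ : 0 < κ) (hg : |g| ≤ κ ^ 2) :
    |regInv κ x * g| ≤ κ / 2 := by
  have hpos : 0 < x ^ 2 + κ ^ 2 := by positivity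
  rw [regInv, abs_mul, abs_div, abs_of_pos hpos, div_mul_eq_mul_div, div_le_iff₀ hpos]
  have amgm : 2 * (|x| * κ) ≤ x ^ 2 + κ ^ 2 := by
    nlinarith [sq_nonneg (|x| - κ), sq_abs x]
  calc |x| * |g| ≤ |x| * κ ^ 2 := by gcongr
    _ ≤ κ / 2 * (x ^ 2 + κ ^ 2) := by nlinarith

theorem one_sub_regInv_mul_self {κ : ℝ} (hκ : 0 < κ) (x : ℝ) :
    1 - regInv κ x * x = κ ^ 2 * (x ^ 2 + κ ^ 2)⁻¹ := by
  rw [regInv]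
  field_simp
  ring

theorem hasDerivAt_regInv {κ : ℝ} (hκ : 0 < κ) (x : ℝ) :
    HasDerivAt (regInv κ) ((κ ^ 2 - x ^ 2) / (x ^ 2 + κ ^ 2) ^ 2) x := by
  have hpos : x ^ 2 + κ ^ 2 ≠ 0 := by positivity
  refine ((hasDerivAt_id x).div (((hasDerivAt_id x).pow 2).add_const (κ ^ 2)) hpos).congr_deriv ?_
  simp only [id, Pi.pow_apply, Nat.cast_ofNat]
  ring

theorem abs_deriv_regInv_mul_le {κ g : ℝ} (hκ : 0 < κ) (hg : |g| ≤ κ ^ 2) (x : ℝ) :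
    |(κ ^ 2 - x ^ 2) / (x ^ 2 + κ ^ 2) ^ 2 * g| ≤ κ ^ 2 * (x ^ 2 + κ ^ 2)⁻¹ := by
  have hpos : 0 < x ^ 2 + κ ^ 2 := by positivity
  have hnum : |κ ^ 2 - x ^ 2| ≤ x ^ 2 + κ ^ 2 :=
    abs_le.2 ⟨by linarith [sq_nonneg κ], by linarith [sq_nonneg x]⟩
  calc |(κ ^ 2 - x ^ 2) / (x ^ 2 + κ ^ 2) ^ 2 * g|
      = |κ ^ 2 - x ^ 2| / (x ^ 2 + κ ^ 2) ^ 2 * |g| := by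
        rw [abs_mul, abs_div, abs_of_pos (pow_pos hpos 2)]
    _ ≤ (x ^ 2 + κ ^ 2) / (x ^ 2 + κ ^ 2) ^ 2 * κ ^ 2 := by gcongr
    _ = κ ^ 2 * (x ^ 2 + κ ^ 2)⁻¹ := by field_simp

theorem sq_mul_inv_sq_add_sq_le {A B κ : ℝ} (hκ : 0 < κ) (hA : B = 0 → 1 ≤ |A|)
    (hB : B ≠ 0 → 1 ≤ |B|) (y : ℝ) :
    κ ^ 2 * ((A + B * y) ^ 2 + κ ^ 2)⁻¹
      ≤ |B| * (κ ^ 2 * ((A + B * y) ^ 2 + κ ^ 2)⁻¹) + κ / 2 := by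
  by_cases hB0 : B = 0
  · rw [hB0, abs_zero, zero_mul, zero_mul, zero_add, add_zero, ← div_eq_mul_inv,
      div_le_iff₀ (by positivity)]
    nlinarith [sq_nonneg (|A| - κ), sq_abs A, hA hB0]
  · have : 0 ≤ κ ^ 2 * ((A + B * y) ^ 2 + κ ^ 2)⁻¹ := by positivity
    nlinarith [hB hB0]

theorem abs_one_sub_regInv_add_abs_le {B κ x g g' : ℝ} (hκ : 0 < κ) (hg0 : g ≠ 0)
    (hg : |g| ≤ κ ^ 2) (hg' : |g'| ≤ κ ^ 2) :
    |1 - regInv κ x * g * (x / g)|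
      + |(κ ^ 2 - x ^ 2) / (x ^ 2 + κ ^ 2) ^ 2 * B * g + regInv κ x * g'|
      ≤ (1 + |B|) * (κ ^ 2 * (x ^ 2 + κ ^ 2)⁻¹) + κ / 2 := by
  have hres : regInv κ x * g * (x / g) = regInv κ x * x := by field_simp
  have hmain : |(κ ^ 2 - x ^ 2) / (x ^ 2 + κ ^ 2) ^ 2 * B * g|
      ≤ |B| * (κ ^ 2 * (x ^ 2 + κ ^ 2)⁻¹) := by
    rw [mul_right_comm, abs_mul, mul_comm]
    gcongr
    exact abs_deriv_regInv_mul_le hκ hg x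
  rw [hres, one_sub_regInv_mul_self hκ, abs_of_pos (by positivity)]
  linarith [abs_add_le ((κ ^ 2 - x ^ 2) / (x ^ 2 + κ ^ 2) ^ 2 * B * g) (regInv κ x * g'),
    abs_regInv_mul_le (x := x) hκ hg']

theorem norm_integral_cexp_mul_I_le_of_deriv_eq_linear_div {A B κ a b : ℝ} {ψ G G' : ℝ → ℝ}
    (hab : a ≤ b) (hκ : 0 < κ) (hA : B = 0 → 1 ≤ |A|) (hB : B ≠ 0 → 1 ≤ |B|)
    (hψ : ∀ y ∈ Set.Icc a b, HasDerivAt ψ ((A + B * y) / G y) y)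
    (hG : ∀ y ∈ Set.Icc a b, HasDerivAt G (G' y) y) (hG' : ContinuousOn G' (Set.Icc a b))
    (hG0 : ∀ y ∈ Set.Icc a b, G y ≠ 0) (hGκ : ∀ y ∈ Set.Icc a b, |G y| ≤ κ ^ 2)
    (hG'κ : ∀ y ∈ Set.Icc a b, |G' y| ≤ κ ^ 2) :
    ‖∫ y in a..b, Complex.exp (ψ y * Complex.I)‖ ≤ (1 + 2 * Real.pi + (b - a)) * κ := by
  have hpos (y : ℝ) : (A + B * y) ^ 2 + κ ^ 2 ≠ 0 := by positivity
  have hlin (y : ℝ) : HasDerivAt (fun y => A + B * y) B y := by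
    simpa using ((hasDerivAt_id y).const_mul B).const_add A
  have hreg (y : ℝ) : HasDerivAt (fun y => regInv κ (A + B * y))
      ((κ ^ 2 - (A + B * y) ^ 2) / ((A + B * y) ^ 2 + κ ^ 2) ^ 2 * B) y :=
    (hasDerivAt_regInv hκ _).comp y (hlin y)
  have hGc : ContinuousOn G (Set.Icc a b) := fun y hy => (hG y hy).continuousAt.continuousWithinAt
  have hregc : Continuous fun y => regInv κ (A + B * y) :=
    continuous_iff_continuousAt.2 fun y => (hreg y).continuousAt
  have hregc' : Continuous fun y =>
      (κ ^ 2 - (A + B * y) ^ 2) / ((A + B * y) ^ 2 + κ ^ 2) ^ 2 :=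
    Continuous.div (by fun_prop) (by fun_prop) fun y => pow_ne_zero 2 (hpos y)
  have : Continuous fun y => ((A + B * y) ^ 2 + κ ^ 2)⁻¹ :=
    Continuous.inv₀ (by fun_prop) hpos
  refine (norm_integral_cexp_mul_I_le
    (h := fun y => 2 * κ ^ 2 * |B| * ((A + B * y) ^ 2 + κ ^ 2)⁻¹ + κ) hab hψ
    (ContinuousOn.div (by fun_prop) hGc hG0) (fun y hy => (hreg y).mul (hG y hy))
    (((hregc'.mul continuous_const).continuousOn.mul hGc).add (hregc.continuousOn.mul hG'))
    (Continuous.intervalIntegrable (by fun_prop) a b) fun y hy => ?_).trans ?_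
  · simp only [Pi.mul_apply]
    linarith [abs_one_sub_regInv_add_abs_le (B := B) (x := A + B * y) hκ (hG0 y hy) (hGκ y hy)
      (hG'κ y hy), sq_mul_inv_sq_add_sq_le hκ hA hB y]
  · have hM {y : ℝ} (hy : y ∈ Set.Icc a b) : |regInv κ (A + B * y) * G y| ≤ κ / 2 :=
      abs_regInv_mul_le hκ (hGκ y hy)
    rw [intervalIntegral.integral_add (Continuous.intervalIntegrable (by fun_prop) a b) (by simp),
      intervalIntegral.integral_const_mul, intervalIntegral.integral_const, smul_eq_mul]
    have hpi := mul_le_mul_of_nonneg_left (abs_mul_integral_inv_sq_add_sq_le A B a b hκ)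
      (sq_nonneg κ)
    have : κ ^ 2 * (Real.pi / κ) = Real.pi * κ := by field_simp
    simp only [Pi.mul_apply]
    linarith [hM (Set.left_mem_Icc.2 hab), hM (Set.right_mem_Icc.2 hab)]

theorem one_le_abs_natCast_sub {m n : ℕ} (h : m ≠ n) : 1 ≤ |(m : ℝ) - n| := by
  exact_mod_cast Int.one_le_abs (sub_ne_zero.2 (Nat.cast_injective.ne h : (m : ℤ) ≠ n))

theorem hasDerivAt_mul_sq_div_add {u z : ℝ → ℝ} {u' z' y : ℝ} (hu : HasDerivAt u u' y)
    (hz : HasDerivAt z z' y) (hne : u y + z y ≠ 0) :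
    HasDerivAt (fun y => (u y * z y) ^ 2 / (u y + z y))
      (u y * z y * (2 * u' * z y ^ 2 + 2 * z' * u y ^ 2 + u y * z y * (u' + z'))
        / (u y + z y) ^ 2) y := by
  refine (((hu.mul hz).pow 2).div (hu.add hz) hne).congr_deriv ?_
  simp only [Pi.mul_apply, Pi.add_apply, Pi.pow_apply, Nat.cast_ofNat]
  ring

theorem mul_sq_div_add_le {u z R : ℝ} (hu : 0 < u) (hz : 0 < z) (huR : u ≤ R) (hzR : z ≤ R) :
    (u * z) ^ 2 / (u + z) ≤ R ^ 3 := by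
  have hR : 0 < R := hu.trans_le huR
  rw [div_le_iff₀ (by positivity)]
  calc (u * z) ^ 2 = u * z * u * z := by ring
    _ ≤ R * R * R * (u + z) := by
      gcongr
      linarith
    _ = R ^ 3 * (u + z) := by ring

theorem abs_deriv_mul_sq_div_add_le {u z u' z' R : ℝ} (hu : 0 < u) (hz : 0 < z) (huR : u ≤ R)
    (hzR : z ≤ R) (hu'0 : 0 ≤ u') (hz'0 : 0 ≤ z') (hu' : 2 * u' ≤ R) (hz' : 2 * z' ≤ R) :
    |u * z * (2 * u' * z ^ 2 + 2 * z' * u ^ 2 + u * z * (u' + z')) / (u + z) ^ 2| ≤ R ^ 3 := by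
  have hR : 0 < R := hu.trans_le huR
  rw [abs_of_nonneg (by positivity), div_le_iff₀ (by positivity)]
  calc u * z * (2 * u' * z ^ 2 + 2 * z' * u ^ 2 + u * z * (u' + z'))
      ≤ R * R * (R * z ^ 2 + R * u ^ 2 + u * z * R) := by
        gcongr
        linarith
    _ ≤ R * R * (R * (u + z) ^ 2) := by
        gcongr
        linarith [mul_pos (mul_pos hu hz) hR]
    _ = R ^ 3 * (u + z) ^ 2 := by ring

theorem mul_inv_sq_sub_inv_sq_eq {u z θ : ℝ} (hu : 0 < u) (hz : 0 < z) (hθ : θ ≠ 0) :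
    θ * (1 / u ^ 2 - 1 / z ^ 2) = (z - u) / ((u * z) ^ 2 / (u + z) / θ) := by
  have : u + z ≠ 0 := (add_pos hu hz).ne'
  field_simp
  ring

theorem natCast_add_mul_mem_Ioc {a a' : ℕ} {R y : ℝ} (ha : 1 ≤ a) (haR : (a : ℝ) + 2 * a' ≤ R)
    (hy : y ∈ Set.Icc (0 : ℝ) 2) : (a : ℝ) + a' * y ∈ Set.Ioc 0 R := by
  have : (1 : ℝ) ≤ a := Nat.one_le_cast.2 ha
  have := mul_nonneg a'.cast_nonneg hy.1
  have := mul_le_mul_of_nonneg_left hy.2 a'.cast_nonneg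
  constructor <;> linarith

theorem norm_integral_cexp_mul_I_le_of_deriv_eq_sub_inv_sq {a a' b b' : ℕ} {R θ κ : ℝ} {ψ : ℝ → ℝ}
    (ha : 1 ≤ a) (hb : 1 ≤ b) (hne : (a, a') ≠ (b, b')) (haR : (a : ℝ) + 2 * a' ≤ R)
    (hbR : (b : ℝ) + 2 * b' ≤ R) (hκ : 0 < κ) (hθ : R ^ 3 ≤ κ ^ 2 * |θ|)
    (hψ : ∀ y ∈ Set.Icc (0 : ℝ) 2,
      HasDerivAt ψ (θ * (1 / ((a : ℝ) + a' * y) ^ 2 - 1 / ((b : ℝ) + b' * y) ^ 2)) y) :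
    ‖∫ y in (0 : ℝ)..2, Complex.exp (ψ y * Complex.I)‖ ≤ 10 * κ := by
  have hlin (c c' : ℕ) (y : ℝ) : HasDerivAt (fun y : ℝ => (c : ℝ) + c' * y) c' y := by
    simpa using ((hasDerivAt_id y).const_mul (c' : ℝ)).const_add (c : ℝ)
  have hu {y : ℝ} (hy : y ∈ Set.Icc (0 : ℝ) 2) := natCast_add_mul_mem_Ioc ha haR hy
  have hz {y : ℝ} (hy : y ∈ Set.Icc (0 : ℝ) 2) := natCast_add_mul_mem_Ioc hb hbR hy
  have hsum {y : ℝ} (hy : y ∈ Set.Icc (0 : ℝ) 2) := (add_pos (hu hy).1 (hz hy).1).ne'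
  have hR : 0 < R := (hu (y := 0) (by norm_num)).1.trans_le (hu (by norm_num)).2
  have hθ0 : θ ≠ 0 :=
    abs_pos.1 <| pos_of_mul_pos_right ((pow_pos hR 3).trans_le hθ) (sq_nonneg κ)
  have hscale {x : ℝ} (hx : |x| ≤ R ^ 3) : |x / θ| ≤ κ ^ 2 := by
    rw [abs_div, div_le_iff₀ (abs_pos.2 hθ0)]
    exact hx.trans hθ
  refine (norm_integral_cexp_mul_I_le_of_deriv_eq_linear_div (A := (b : ℝ) - a)
    (B := (b' : ℝ) - a') zero_le_two hκ (fun hB => one_le_abs_natCast_sub fun hab => hne ?_)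
    (fun hB => one_le_abs_natCast_sub (by simpa [sub_eq_zero] using hB))
    (fun y hy => (hψ y hy).congr_deriv ?_)
    (fun y hy => (hasDerivAt_mul_sq_div_add (hlin a a' y) (hlin b b' y) (hsum hy)).div_const θ)
    (ContinuousOn.div_const (ContinuousOn.div (by fun_prop) (by fun_prop)
      fun y hy => pow_ne_zero 2 (hsum hy)) θ)
    (fun y hy => div_ne_zero (div_ne_zero (pow_ne_zero 2 (mul_pos (hu hy).1 (hz hy).1).ne')
      (hsum hy)) hθ0)
    (fun y hy => hscale ?_) (fun y hy => hscale ?_)).trans ?_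
  · exact Prod.ext hab.symm (Nat.cast_injective (sub_eq_zero.1 hB)).symm
  · rw [show (b : ℝ) - a + (b' - a') * y = (b + b' * y) - (a + a' * y) by ring]
    exact mul_inv_sq_sub_inv_sq_eq (hu hy).1 (hz hy).1 hθ0
  · have := (hu hy).1
    have := (hz hy).1
    rw [abs_of_pos (by positivity)]
    exact mul_sq_div_add_le (hu hy).1 (hz hy).1 (hu hy).2 (hz hy).2
  · exact abs_deriv_mul_sq_div_add_le (hu hy).1 (hz hy).1 (hu hy).2 (hz hy).2 a'.cast_nonneg
      b'.cast_nonneg (by linarith [a.cast_nonneg (α := ℝ)]) (by linarith [b.cast_nonneg (α := ℝ)])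
  · gcongr
    linarith [Real.pi_lt_d2]

theorem DigitWord.norm_integral_cexp_toMap_sub_le {N : ℕ} {w v : DigitWord N} {R θ κ : ℝ}
    (hne : w ≠ v) (hpar : Even w.length ↔ Even v.length) (hw : 3 * (den w : ℝ) ≤ R)
    (hv : 3 * (den v : ℝ) ≤ R) (hκ : 0 < κ) (hθ : R ^ 3 ≤ κ ^ 2 * |θ|) :
    ‖∫ y in (0 : ℝ)..2, Complex.exp ((θ * (toMap w y - toMap v y) : ℝ) * Complex.I)‖ ≤ 10 * κ := by
  have hprev (u : DigitWord N) : (prevDen u : ℝ) ≤ den u := Nat.cast_le.2 (prevDen_le_den u)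
  have hsign : (-1 : ℝ) ^ v.length = (-1) ^ w.length := neg_one_pow_congr hpar.symm
  refine norm_integral_cexp_mul_I_le_of_deriv_eq_sub_inv_sq (R := R)
    (θ := θ * (-1) ^ w.length)
    (one_le_den w) (one_le_den v)
    (fun h => hne (eq_of_den_eq (Prod.ext_iff.1 h).1 (Prod.ext_iff.1 h).2 hpar))
    (by linarith [hprev w]) (by linarith [hprev v]) hκ ?_ fun y hy =>
      (((hasDerivAt_toMap w hy.1).sub (hasDerivAt_toMap v hy.1)).const_mul θ).congr_deriv ?_
  · rwa [abs_mul, abs_pow, abs_neg, abs_one, one_pow, mul_one]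
  · rw [hsign, denAt, denAt]
    ring

/-! ### From Lebesgue averages to averages against a regular measure -/

theorem integrable_indicator_Ioc_add {μ ν : Measure ℝ} [IsFiniteMeasure μ] [SFinite ν] {g : ℝ → ℝ}
    (hg : Integrable g ν) (r : ℝ) :
    Integrable (fun p : ℝ × ℝ => (Set.Ioc p.1 (p.1 + r)).indicator g p.2) (μ.prod ν) := by
  have hS : MeasurableSet {p : ℝ × ℝ | p.1 < p.2 ∧ p.2 ≤ p.1 + r} :=
    (measurableSet_lt measurable_fst measurable_snd).inter
      (measurableSet_le measurable_snd (measurable_fst.add_const r))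
  exact (hg.comp_snd μ).indicator hS

theorem integrable_setIntegral_Ioc_add {μ ν : Measure ℝ} [IsFiniteMeasure μ] [SFinite ν]
    {g : ℝ → ℝ} (hg : Integrable g ν) (r : ℝ) :
    Integrable (fun y => ∫ x in Set.Ioc y (y + r), g x ∂ν) μ := by
  simpa only [integral_indicator measurableSet_Ioc] using
    (integrable_indicator_Ioc_add hg r).integral_prod_left

theorem integral_setIntegral_Ioc_add {μ ν : Measure ℝ} [IsFiniteMeasure μ] [SFinite ν] {g : ℝ → ℝ}
    (hg : Integrable g ν) (r : ℝ) :
    ∫ y, ∫ x in Set.Ioc y (y + r), g x ∂ν ∂μ = ∫ x, μ.real (Set.Ico (x - r) x) * g x ∂ν := by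
  have hcol (x : ℝ) : (fun y => (Set.Ioc y (y + r)).indicator g x)
      = (Set.Ico (x - r) x).indicator fun _ => g x := by
    ext y
    simp only [Set.indicator_apply, Set.mem_Ioc, Set.mem_Ico, sub_le_iff_le_add, and_comm]
  have hswap := integral_integral_swap (f := fun y x => (Set.Ioc y (y + r)).indicator g x)
    (integrable_indicator_Ioc_add (μ := μ) hg r)
  simpa only [hcol, integral_indicator measurableSet_Ioc, integral_indicator measurableSet_Ico,
    setIntegral_const, smul_eq_mul] using hswap

theorem mul_sub_le_integral_of_lipschitz {g : ℝ → ℝ} {L r y : ℝ} (hL0 : 0 ≤ L) (hr : 0 ≤ r)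
    (hg : IntervalIntegrable g volume y (y + r))
    (hL : ∀ x ∈ Set.Icc y (y + r), |g y - g x| ≤ L * |y - x|) :
    r * (g y - L * r) ≤ ∫ x in y..y + r, g x := by
  calc r * (g y - L * r) = ∫ _ in y..y + r, (g y - L * r) := by
        rw [intervalIntegral.integral_const, smul_eq_mul, add_sub_cancel_left]
    _ ≤ ∫ x in y..y + r, g x := by
        refine intervalIntegral.integral_mono_on (by linarith) (by simp) hg fun x hx => ?_
        have hxy : L * |y - x| ≤ L * r := by
          gcongr
          exact abs_le.2 ⟨by linarith [hx.2], by linarith [hx.1]⟩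
        linarith [le_abs_self (g y - g x), hL x hx]

theorem integral_le_of_measureReal_Ico_le {μ : Measure ℝ} [IsProbabilityMeasure μ] {g : ℝ → ℝ}
    {a b c L r m : ℝ} (hg : Measurable g) (hg0 : ∀ x, 0 ≤ g x) (hg1 : ∀ x, g x ≤ 1)
    (hμ : ∀ᵐ y ∂μ, y ∈ Set.Icc a b) (hr : 0 < r) (hac : a ≤ c) (hbc : b + r ≤ c) (hL0 : 0 ≤ L)
    (hL : ∀ x ∈ Set.Icc a c, ∀ y ∈ Set.Icc a c, |g x - g y| ≤ L * |x - y|)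
    (hm : ∀ x, μ.real (Set.Ico (x - r) x) ≤ m) :
    ∫ y, g y ∂μ ≤ m / r * (∫ x in a..c, g x) + L * r := by
  have hint (η : Measure ℝ) [IsFiniteMeasure η] : Integrable g η :=
    Integrable.of_bound hg.aestronglyMeasurable 1 <| Eventually.of_forall fun x => by
      rw [Real.norm_of_nonneg (hg0 x)]
      exact hg1 x
  set ν : Measure ℝ := volume.restrict (Set.Ioc a c)
  have hlower : ∀ᵐ y ∂μ, r * (g y - L * r) ≤ ∫ x in Set.Ioc y (y + r), g x ∂ν := by
    filter_upwards [hμ] with y hy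
    have hIcc : Set.Icc y (y + r) ⊆ Set.Icc a c :=
      Set.Icc_subset_Icc hy.1 (by linarith [hy.2])
    have hIoc : Set.Ioc y (y + r) ⊆ Set.Ioc a c :=
      Set.Ioc_subset_Ioc hy.1 (by linarith [hy.2])
    rw [Measure.restrict_restrict measurableSet_Ioc, Set.inter_eq_left.2 hIoc,
      ← intervalIntegral.integral_of_le (by linarith)]
    have hy' : y ∈ Set.Icc y (y + r) := Set.left_mem_Icc.2 (by linarith)
    exact mul_sub_le_integral_of_lipschitz hL0 hr.le
      ((intervalIntegrable_iff_integrableOn_Ioc_of_le (by linarith)).2 (hint _))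
      fun x hx => hL y (hIcc hy') x (hIcc hx)
  have hmain : r * (∫ y, g y ∂μ - L * r) ≤ m * ∫ x, g x ∂ν := by
    calc r * (∫ y, g y ∂μ - L * r) = ∫ y, r * (g y - L * r) ∂μ := by
          rw [integral_const_mul, integral_sub (hint μ) (integrable_const _), integral_const,
            probReal_univ, one_smul]
      _ ≤ ∫ y, ∫ x in Set.Ioc y (y + r), g x ∂ν ∂μ :=
          integral_mono_ae (((hint μ).sub (integrable_const _)).const_mul r)
            (integrable_setIntegral_Ioc_add (hint ν) r) hlower
      _ = ∫ x, μ.real (Set.Ico (x - r) x) * g x ∂ν := integral_setIntegral_Ioc_add (hint ν) r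
      _ ≤ ∫ x, m * g x ∂ν := integral_mono_of_nonneg
          (Eventually.of_forall fun x => mul_nonneg measureReal_nonneg (hg0 x))
          ((hint ν).const_mul m)
          (Eventually.of_forall fun x => mul_le_mul_of_nonneg_right (hm x) (hg0 x))
      _ = m * ∫ x, g x ∂ν := integral_const_mul _ _
  rw [intervalIntegral.integral_of_le hac, div_mul_eq_mul_div, ← sub_le_iff_le_add,
    le_div_iff₀ hr]
  linarith

/-! ### Exponential sums -/

theorem norm_cexp_mul_I_sub_le (a b : ℝ) :
    ‖Complex.exp (a * Complex.I) - Complex.exp (b * Complex.I)‖ ≤ |a - b| := by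
  have hfactor : Complex.exp (a * Complex.I) - Complex.exp (b * Complex.I)
      = Complex.exp (b * Complex.I) * (Complex.exp (Complex.I * (a - b : ℝ)) - 1) := by
    rw [mul_sub, ← Complex.exp_add, mul_one]
    congr 2
    push_cast
    ring
  rw [hfactor, norm_mul, Complex.norm_exp_ofReal_mul_I, one_mul]
  exact Real.norm_exp_I_mul_ofReal_sub_one_le

theorem norm_sum_mul_cexp_sq {ι : Type*} (W : Finset ι) (c φ : ι → ℝ) :
    ((‖∑ v ∈ W, c v * Complex.exp (φ v * Complex.I)‖ ^ 2 : ℝ) : ℂ) =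
      ∑ w ∈ W, ∑ v ∈ W, c w * c v * Complex.exp ((φ w - φ v : ℝ) * Complex.I) := by
  have hconj (w v : ι) : Complex.exp ((φ w - φ v : ℝ) * Complex.I) =
      Complex.exp (φ w * Complex.I) * (starRingEnd ℂ) (Complex.exp (φ v * Complex.I)) := by
    rw [← Complex.exp_conj, map_mul, Complex.conj_ofReal, Complex.conj_I, ← Complex.exp_add]
    congr 1
    push_cast
    ring
  rw [Complex.ofReal_pow, ← Complex.mul_conj', map_sum, Finset.sum_mul_sum]
  refine Finset.sum_congr rfl fun w _ => Finset.sum_congr rfl fun v _ => ?_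
  rw [hconj, map_mul, Complex.conj_ofReal]
  ring

section SquareMean

variable {X ι : Type*} [MeasurableSpace X] {η : Measure X} [IsFiniteMeasure η] {W : Finset ι}
  {c : ι → ℝ} {φ : ι → X → ℝ} (hφ : ∀ v, Measurable (φ v))

include hφ

theorem integral_norm_sum_mul_cexp_sq :
    ((∫ y, ‖∑ v ∈ W, c v * Complex.exp (φ v y * Complex.I)‖ ^ 2 ∂η : ℝ) : ℂ) =
      ∑ w ∈ W, ∑ v ∈ W, c w * c v * ∫ y, Complex.exp ((φ w y - φ v y : ℝ) * Complex.I) ∂η := by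
  have hint (w v : ι) : Integrable
      (fun y => c w * c v * Complex.exp ((φ w y - φ v y : ℝ) * Complex.I)) η :=
    .const_mul (.of_bound (Measurable.aestronglyMeasurable (by fun_prop)) 1 <|
      .of_forall fun y => (Complex.norm_exp_ofReal_mul_I _).le) _
  simp only [← integral_complex_ofReal, norm_sum_mul_cexp_sq, ← integral_const_mul]
  rw [integral_finsetSum _ fun w _ => integrable_finsetSum _ fun v _ => hint w v]
  exact Finset.sum_congr rfl fun w _ => integral_finsetSum _ fun v _ => hint w v

theorem integral_norm_sum_mul_cexp_sq_le {M δ : ℝ} (hc0 : ∀ v ∈ W, 0 ≤ c v)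
    (hc1 : ∑ v ∈ W, c v ≤ 1) (hM0 : 0 ≤ M) (hM : ∀ v ∈ W, c v ≤ M) (hδ0 : 0 ≤ δ)
    (hδ : ∀ w ∈ W, ∀ v ∈ W, w ≠ v →
      ‖∫ y, Complex.exp ((φ w y - φ v y : ℝ) * Complex.I) ∂η‖ ≤ δ) :
    ∫ y, ‖∑ v ∈ W, c v * Complex.exp (φ v y * Complex.I)‖ ^ 2 ∂η ≤
      η.real Set.univ * M + δ := by
  set m := η.real Set.univ
  have hm : 0 ≤ m := measureReal_nonneg
  have hpair : ∀ w ∈ W, ∀ v ∈ W, ‖∫ y, Complex.exp ((φ w y - φ v y : ℝ) * Complex.I) ∂η‖ ≤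
      (if w = v then m else 0) + δ := by
    intro w hw v hv
    split_ifs with h
    · refine (norm_integral_le_of_norm_le_const (C := 1) <|
        .of_forall fun y => (Complex.norm_exp_ofReal_mul_I _).le).trans ?_
      rw [one_mul]
      exact le_add_of_nonneg_right hδ0
    · rw [zero_add]
      exact hδ w hw v hv h
  calc ∫ y, ‖∑ v ∈ W, c v * Complex.exp (φ v y * Complex.I)‖ ^ 2 ∂η
      ≤ ‖((∫ y, ‖∑ v ∈ W, c v * Complex.exp (φ v y * Complex.I)‖ ^ 2 ∂η : ℝ) : ℂ)‖ := by
        rw [Complex.norm_real]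
        exact Real.le_norm_self _
    _ ≤ ∑ w ∈ W, ∑ v ∈ W, c w * c v * ((if w = v then m else 0) + δ) := by
        rw [integral_norm_sum_mul_cexp_sq hφ]
        refine norm_sum_le_of_le _ fun w hw => norm_sum_le_of_le _ fun v hv => ?_
        rw [norm_mul, norm_mul, Complex.norm_of_nonneg (hc0 w hw),
          Complex.norm_of_nonneg (hc0 v hv)]
        exact mul_le_mul_of_nonneg_left (hpair w hw v hv) (mul_nonneg (hc0 w hw) (hc0 v hv))
    _ = ∑ w ∈ W, c w * (m * c w + δ * ∑ v ∈ W, c v) := by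
        refine Finset.sum_congr rfl fun w hw => ?_
        simp only [mul_add, Finset.sum_add_distrib, mul_ite, mul_zero, Finset.sum_ite_eq, if_pos hw,
          ← Finset.sum_mul, ← Finset.mul_sum]
        ring
    _ ≤ ∑ w ∈ W, c w * (m * M + δ) := by
        refine Finset.sum_le_sum fun w hw => mul_le_mul_of_nonneg_left ?_ (hc0 w hw)
        exact add_le_add (mul_le_mul_of_nonneg_left (hM w hw) hm) (mul_le_of_le_one_right hδ0 hc1)
    _ ≤ m * M + δ := by
        rw [← Finset.sum_mul]
        exact mul_le_of_le_one_left (by positivity) hc1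

end SquareMean

namespace DigitWord

variable {N : ℕ}

/-- The exponential sum `∑ ν(v) e^{iθ φ_v(y)}` over the inverse branches `φ_v` attached to a finite
set of words. -/
noncomputable def expSum (ν : Measure (Fin N)) (W : Finset (DigitWord N)) (θ y : ℝ) : ℂ :=
  ∑ v ∈ W, prob ν v * Complex.exp ((θ * toMap v y : ℝ) * Complex.I)

section ExpSum

variable {ν : Measure (Fin N)} {W : Finset (DigitWord N)} (θ : ℝ)

theorem measurable_expSum : Measurable (expSum ν W θ) :=
  Finset.measurable_sum _ fun v _ => by
    have := measurable_toMap v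
    fun_prop

variable {μ : Measure ℝ} [IsFiniteMeasure μ]

theorem integrable_cexp_toMap (v : DigitWord N) :
    Integrable (fun y => Complex.exp ((θ * toMap v y : ℝ) * Complex.I)) μ := by
  have := measurable_toMap v
  exact .of_bound (Measurable.aestronglyMeasurable (by fun_prop)) 1 <|
    .of_forall fun y => (Complex.norm_exp_ofReal_mul_I _).le

theorem integrable_expSum : Integrable (expSum ν W θ) μ :=
  integrable_finsetSum _ fun v _ => (integrable_cexp_toMap θ v).const_mul _

theorem integral_expSum :
    ∫ y, expSum ν W θ y ∂μ =
      ∑ v ∈ W, prob ν v * ∫ y, Complex.exp ((θ * toMap v y : ℝ) * Complex.I) ∂μ := by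
  simp only [expSum, ← integral_const_mul]
  exact integral_finsetSum _ fun v _ => (integrable_cexp_toMap θ v).const_mul _

variable (hW : ∑ v ∈ W, prob ν v ≤ 1)

include hW

theorem norm_expSum_le_one (y : ℝ) : ‖expSum ν W θ y‖ ≤ 1 := by
  refine (norm_sum_le_of_le _ fun v _ => ?_).trans hW
  rw [norm_mul, Complex.norm_exp_ofReal_mul_I, mul_one, Complex.norm_of_nonneg (prob_nonneg ν v)]

theorem integral_norm_expSum_sq_le {M R κ : ℝ} (hM0 : 0 ≤ M) (hM : ∀ v ∈ W, prob ν v ≤ M)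
    (hR : ∀ v ∈ W, 3 * (den v : ℝ) ≤ R)
    (hpar : ∀ w ∈ W, ∀ v ∈ W, Even w.length ↔ Even v.length) (hκ : 0 < κ)
    (hθ : R ^ 3 ≤ κ ^ 2 * |θ|) :
    ∫ y in (0 : ℝ)..2, ‖expSum ν W θ y‖ ^ 2 ≤ 2 * M + 10 * κ := by
  rw [intervalIntegral.integral_of_le zero_le_two]
  refine (integral_norm_sum_mul_cexp_sq_le (φ := fun v y => θ * toMap v y) (δ := 10 * κ)
    (fun v => (measurable_toMap v).const_mul θ) (fun v _ => prob_nonneg ν v) hW hM0 hM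
    (by positivity) fun w hw v hv hne => ?_).trans_eq ?_
  · simpa only [← mul_sub, intervalIntegral.integral_of_le zero_le_two] using
      norm_integral_cexp_toMap_sub_le hne (hpar w hw v hv) (hR w hw) (hR v hv) hκ hθ
  · simp

variable {Q : ℝ} (hQ : 0 < Q) (hden : ∀ v ∈ W, Q ≤ den v)

include hQ hden

theorem norm_expSum_sub_le {x y : ℝ} (hx : 0 ≤ x) (hy : 0 ≤ y) :
    ‖expSum ν W θ x - expSum ν W θ y‖ ≤ |θ| / Q ^ 2 * |x - y| := by
  have hterm : ∀ v ∈ W, |θ * toMap v x - θ * toMap v y| ≤ |θ| / Q ^ 2 * |x - y| := by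
    intro v hv
    have hQ2 : Q ^ 2 ≤ denAt v x * denAt v y := by
      rw [sq]
      exact mul_le_mul ((hden v hv).trans (den_le_denAt v hx))
        ((hden v hv).trans (den_le_denAt v hy)) hQ.le (denAt_pos v hx).le
    rw [← mul_sub, abs_mul, abs_toMap_sub_toMap v hx hy, div_mul_eq_mul_div, ← mul_div_assoc]
    gcongr
  rw [expSum, expSum, ← Finset.sum_sub_distrib]
  calc _ ≤ ∑ v ∈ W, prob ν v * (|θ| / Q ^ 2 * |x - y|) := norm_sum_le_of_le _ fun v hv => by
        rw [← mul_sub, norm_mul, Complex.norm_of_nonneg (prob_nonneg ν v)]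
        exact mul_le_mul_of_nonneg_left ((norm_cexp_mul_I_sub_le _ _).trans (hterm v hv))
          (prob_nonneg ν v)
    _ ≤ |θ| / Q ^ 2 * |x - y| := by
        rw [← Finset.sum_mul]
        exact mul_le_of_le_one_left (by positivity) hW

theorem abs_norm_expSum_sq_sub_le {x y : ℝ} (hx : 0 ≤ x) (hy : 0 ≤ y) :
    |‖expSum ν W θ x‖ ^ 2 - ‖expSum ν W θ y‖ ^ 2| ≤ 2 * |θ| / Q ^ 2 * |x - y| := by
  rw [sq_sub_sq, abs_mul, abs_of_nonneg (by positivity), mul_div_assoc, mul_assoc]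
  exact mul_le_mul (by linarith [norm_expSum_le_one θ hW x, norm_expSum_le_one θ hW y])
    ((abs_norm_sub_norm_le _ _).trans (norm_expSum_sub_le θ hW hQ hden hx hy)) (abs_nonneg _)
    zero_le_two

end ExpSum

end DigitWord

/-! ### Decay of the Fourier transform -/

theorem IsSubdivision.charFun_cfMeasure {N : ℕ} {W : Finset (DigitWord N)}
    (hW : IsSubdivision [] W) (ν : Measure (Fin N)) [IsProbabilityMeasure ν] (θ : ℝ) :
    charFun (cfMeasure ν) θ = ∑ v ∈ W, DigitWord.prob ν v *
      ∫ y, Complex.exp ((θ * DigitWord.toMap v y : ℝ) * Complex.I) ∂cfMeasure ν := by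
  rw [← hW.prob_mul_integral_eq_sum ν (f := fun x => Complex.exp ((θ * x : ℝ) * Complex.I)) (C := 1)
    (Measurable.stronglyMeasurable (by fun_prop)) fun x => (Complex.norm_exp_ofReal_mul_I _).le]
  simp only [DigitWord.prob_nil, Complex.ofReal_one, one_mul, DigitWord.toMap_nil, id_eq,
    charFun_apply_real, Complex.ofReal_mul]

theorem norm_integral_sq_le_integral_norm_sq {X E : Type*} [MeasurableSpace X] {μ : Measure X}
    [IsProbabilityMeasure μ] [NormedAddCommGroup E] [NormedSpace ℝ E] {f : X → E}
    (hf : Integrable f μ) (hf2 : Integrable (fun x => ‖f x‖ ^ 2) μ) :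
    ‖∫ x, f x ∂μ‖ ^ 2 ≤ ∫ x, ‖f x‖ ^ 2 ∂μ := by
  calc ‖∫ x, f x ∂μ‖ ^ 2 ≤ (∫ x, ‖f x‖ ∂μ) ^ 2 := by
        gcongr
        exact norm_integral_le_integral_norm f
    _ ≤ ∫ x, ‖f x‖ ^ 2 ∂μ := even_two.convexOn_pow.map_integral_le (by fun_prop) isClosed_univ
        (.of_forall fun _ => Set.mem_univ _) hf.norm hf2

theorem pow_rpow_two_thirds {x : ℝ} (hx : 0 ≤ x) (k : ℕ) :
    (x ^ (3 * k)) ^ (2 / 3 : ℝ) = x ^ (2 * k) := by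
  rw [← Real.rpow_natCast, ← Real.rpow_mul hx, ← Real.rpow_natCast]
  congr 1
  push_cast
  ring

namespace DigitWord

/-! With `τ = |θ|^{1/136}`, words with denominator of order `τ^24` make the mean square of the
exponential sum over `[0, 2]` of order `τ^{-32}`, while its square varies by `τ^{-2}` at scale
`r = τ^{-90}`. Intervals of that length have measure of order `τ^{-60}`, so passing to the measure
costs a factor `τ^{-60} / r = τ^30`, which still leaves `τ^{-2}`. -/

/-- The constant in the mean square bound for exponential sums over words of digits whose
probabilities are at most `C * den ^ (-4 / 3)`. -/
noncomputable def meanSquareConst (N : ℕ) (C : ℝ) : ℝ :=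
  C * (4 * (N + 2) ^ 3) ^ (2 / 3 : ℝ) * (2 * C + 90 * (N + 1) ^ 2) + 2

section MeanSquare

variable {N : ℕ} {ν : Measure (Fin N)} {C : ℝ}
  (hprob : ∀ w : DigitWord N, prob ν w ≤ C * (den w : ℝ) ^ (-(2 * (2 / 3) : ℝ)))
  {W : Finset (DigitWord N)} (hW : ∑ v ∈ W, prob ν v ≤ 1) {τ θ : ℝ} (hτ : 1 ≤ τ)
  (hθ : |θ| = τ ^ 136) (hden : ∀ v ∈ W, (den v : ℝ) ∈ Set.Icc (τ ^ 24) ((N + 1) * τ ^ 24))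
  (hpar : ∀ w ∈ W, ∀ v ∈ W, Even w.length ↔ Even v.length)

include hprob hW hτ hθ hden hpar

theorem integral_norm_expSum_sq_le_of_den_mem_Icc :
    ∫ y in (0 : ℝ)..2, ‖expSum ν W θ y‖ ^ 2 ≤ (2 * C + 90 * (N + 1) ^ 2) * τ⁻¹ ^ 32 := by
  have hC := nonneg_of_prob_le hprob
  have hM : ∀ v ∈ W, prob ν v ≤ C * τ⁻¹ ^ 32 := by
    intro v hv
    refine (prob_le_mul_rpow (A := τ⁻¹ ^ 48) (by norm_num) hprob ?_).trans_eq ?_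
    · calc (1 : ℝ) = τ⁻¹ ^ 48 * (τ ^ 24) ^ 2 := by field_simp
        _ ≤ τ⁻¹ ^ 48 * (den v : ℝ) ^ 2 := by
          gcongr
          exact (hden v hv).1
    · rw [pow_rpow_two_thirds (by positivity) 16]
  refine (integral_norm_expSum_sq_le θ hW (M := C * τ⁻¹ ^ 32) (R := 3 * (N + 1) * τ ^ 24)
    (κ := (3 * (N + 1)) ^ 2 * τ⁻¹ ^ 32) (by positivity) hM
    (fun v hv => by linarith [(hden v hv).2]) hpar (by positivity) ?_).trans_eq (by ring)
  calc (3 * (N + 1) * τ ^ 24) ^ 3 = (3 * (N + 1)) ^ 3 * τ ^ 72 := by ring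
    _ ≤ (3 * (N + 1)) ^ 4 * τ ^ 72 := by
        gcongr
        · linarith [N.cast_nonneg (α := ℝ)]
        · norm_num
    _ = ((3 * (N + 1)) ^ 2 * τ⁻¹ ^ 32) ^ 2 * |θ| := by
        rw [hθ]
        field_simp

variable [IsProbabilityMeasure ν]

theorem integral_cfMeasure_norm_expSum_sq_le :
    ∫ y, ‖expSum ν W θ y‖ ^ 2 ∂cfMeasure ν ≤ meanSquareConst N C * τ⁻¹ ^ 2 := by
  set A : ℝ := 4 * (N + 2) ^ 3 with hA_def
  have hA : 0 ≤ A := by positivity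
  have hC := nonneg_of_prob_le hprob
  have : 0 < τ := by linarith
  have hIco (x : ℝ) :
      (cfMeasure ν).real (Set.Ico (x - τ⁻¹ ^ 90) x) ≤ C * A ^ (2 / 3 : ℝ) * τ⁻¹ ^ 60 := by
    refine (cfMeasure_real_le_rpow (r := τ⁻¹ ^ 90) (by norm_num) hprob measurableSet_Ico
      (by positivity) fun y hy z hz => ?_).trans_eq ?_
    · exact abs_le.2 ⟨by linarith [hy.1, hz.2], by linarith [hy.2, hz.1]⟩
    · rw [Real.mul_rpow hA (by positivity), pow_rpow_two_thirds (by positivity) 30, mul_assoc]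
  have hmem : ∀ᵐ y ∂cfMeasure ν, y ∈ Set.Icc (0 : ℝ) 1 := (ae_mem_cfInterval ν).mono fun y hy =>
    ⟨(pos_of_mem_cfInterval hy).le, (lt_one_of_mem_cfInterval hy).le⟩
  refine (integral_le_of_measureReal_Ico_le (a := 0) (c := 2) (r := τ⁻¹ ^ 90)
    (L := 2 * |θ| / (τ ^ 24) ^ 2) ((measurable_expSum θ).norm.pow_const 2) (fun y => by positivity)
    (fun y => pow_le_one₀ (norm_nonneg _) (norm_expSum_le_one θ hW y)) hmem (by positivity)
    zero_le_two ?_ (by positivity) (fun x hx y hy => abs_norm_expSum_sq_sub_le θ hW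
      (by positivity) (fun v hv => (hden v hv).1) hx.1 hy.1) hIco).trans ?_
  · have : τ⁻¹ ^ 90 ≤ 1 := pow_le_one₀ (by positivity) (inv_le_one_of_one_le₀ hτ)
    linarith
  calc _ ≤ C * A ^ (2 / 3 : ℝ) * τ⁻¹ ^ 60 / τ⁻¹ ^ 90 *
        ((2 * C + 90 * (N + 1) ^ 2) * τ⁻¹ ^ 32) + 2 * |θ| / (τ ^ 24) ^ 2 * τ⁻¹ ^ 90 := by
        gcongr
        exact integral_norm_expSum_sq_le_of_den_mem_Icc hprob hW hτ hθ hden hpar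
    _ = meanSquareConst N C * τ⁻¹ ^ 2 := by
        rw [hθ, meanSquareConst, ← hA_def]
        field_simp

theorem norm_integral_expSum_le :
    ‖∫ y, expSum ν W θ y ∂cfMeasure ν‖ ≤ √(meanSquareConst N C) * τ⁻¹ := by
  have hbound := norm_expSum_le_one (ν := ν) θ hW
  have hsq := (norm_integral_sq_le_integral_norm_sq (integrable_expSum θ)
    (.of_bound ((measurable_expSum θ).norm.pow_const 2).aestronglyMeasurable 1 <|
      .of_forall fun y => by
        rw [Real.norm_of_nonneg (by positivity)]
        exact pow_le_one₀ (norm_nonneg _) (hbound y))).trans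
    (integral_cfMeasure_norm_expSum_sq_le hprob hW hτ hθ hden hpar)
  rw [← Real.sqrt_sq (by positivity : 0 ≤ τ⁻¹), ← Real.sqrt_mul' _ (sq_nonneg _)]
  exact Real.le_sqrt_of_sq_le hsq

end MeanSquare

theorem norm_charFun_cfMeasure_le_of_abs_eq_pow {N : ℕ} {ν : Measure (Fin N)}
    [IsProbabilityMeasure ν] {C : ℝ}
    (hprob : ∀ w : DigitWord N, prob ν w ≤ C * (den w : ℝ) ^ (-(2 * (2 / 3) : ℝ))) {τ θ : ℝ}
    (hτ : 1 ≤ τ) (hθ : |θ| = τ ^ 136) :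
    ‖charFun (cfMeasure ν) θ‖ ≤ 2 * √(meanSquareConst N C) * τ⁻¹ := by
  obtain ⟨n, hn⟩ := exists_nat_ge (τ ^ 24)
  obtain ⟨W, hW, hden⟩ := IsSubdivision.exists_den_mem_Icc (N := N) (Q := τ ^ 24) n []
    (by simp only [den]; push_cast; nlinarith [one_le_pow₀ hτ (n := 24), N.cast_nonneg (α := ℝ)])
    (by simpa using hn)
  have hclass (p : DigitWord N → Prop) [DecidablePred p]
      (hp : ∀ w v, p w → p v → (Even w.length ↔ Even v.length)) :
      ‖∑ v ∈ W.filter p, (prob ν v : ℂ) *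
        ∫ y, Complex.exp ((θ * toMap v y : ℝ) * Complex.I) ∂cfMeasure ν‖ ≤
      √(meanSquareConst N C) * τ⁻¹ := by
    rw [← integral_expSum]
    refine norm_integral_expSum_le hprob ?_ hτ hθ (fun v hv => hden v (Finset.mem_filter.1 hv).1)
      fun w hw v hv => hp w v (Finset.mem_filter.1 hw).2 (Finset.mem_filter.1 hv).2
    rw [← prob_nil ν, ← hW.sum_prob ν]
    exact Finset.sum_le_sum_of_subset_of_nonneg (Finset.filter_subset _ _)
      fun v _ _ => prob_nonneg ν v
  rw [hW.charFun_cfMeasure ν θ, ← Finset.sum_filter_add_sum_filter_not W fun v => Even v.length,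
    mul_assoc, two_mul]
  exact norm_add_le_of_le (hclass _ fun w v hw hv => iff_of_true hw hv)
    (hclass _ fun w v hw hv => iff_of_false hw hv)

theorem exists_norm_charFun_cfMeasure_le {N : ℕ} {ν : Measure (Fin N)} [IsProbabilityMeasure ν]
    {C : ℝ} (hprob : ∀ w : DigitWord N, prob ν w ≤ C * (den w : ℝ) ^ (-(2 * (2 / 3) : ℝ))) :
    ∃ c : ℝ, 0 < c ∧ ∀ t : ℝ, 1 ≤ |t| →
      ‖charFun (cfMeasure ν) t‖ ≤ c * |t| ^ (-(1 / 136) : ℝ) := by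
  have hC := nonneg_of_prob_le hprob
  refine ⟨2 * √(meanSquareConst N C), by unfold meanSquareConst; positivity, fun t ht => ?_⟩
  rw [Real.rpow_neg (abs_nonneg t)]
  refine norm_charFun_cfMeasure_le_of_abs_eq_pow hprob (Real.one_le_rpow ht (by norm_num)) ?_
  rw [← Real.rpow_natCast, ← Real.rpow_mul (abs_nonneg t)]
  norm_num

end DigitWord

/-! ### Random digits in `{1, 2, 3}` -/

/-- The probabilities of the digits `1`, `2`, `3` under `kaufmanLaw`. They are chosen close to
`(13/8)^{-4/3}`, `(57/23)^{-4/3}`, `(77/23)^{-4/3}`, see `kaufmanWeight_pow_mul_le`. -/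
noncomputable def kaufmanWeight : Fin 3 → ℝ
  | 0 => 52 / 100
  | 1 => 29 / 100
  | 2 => 19 / 100

theorem kaufmanWeight_pos (d : Fin 3) : 0 < kaufmanWeight d := by
  fin_cases d <;> norm_num [kaufmanWeight]

theorem sum_ofReal_kaufmanWeight : ∑ d, ENNReal.ofReal (kaufmanWeight d) = 1 := by
  rw [← ENNReal.ofReal_sum_of_nonneg fun d _ => (kaufmanWeight_pos d).le, Fin.sum_univ_three]
  norm_num [kaufmanWeight]

/-- A law of the partial quotients for which a word with denominator `q` has probability
`O(q^{-4/3})`, so that the measure it induces on continued fractions is regular of exponent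
`2/3`. -/
noncomputable def kaufmanLaw : Measure (Fin 3) :=
  (PMF.ofFintype (fun d => ENNReal.ofReal (kaufmanWeight d)) sum_ofReal_kaufmanWeight).toMeasure

instance isProbabilityMeasure_kaufmanLaw : IsProbabilityMeasure kaufmanLaw :=
  PMF.toMeasure.isProbabilityMeasure _

theorem kaufmanLaw_real_singleton (d : Fin 3) : kaufmanLaw.real {d} = kaufmanWeight d := by
  rw [Measure.real, kaufmanLaw, PMF.toMeasure_apply_singleton _ _ (measurableSet_singleton d),
    PMF.ofFintype_apply, ENNReal.toReal_ofReal (kaufmanWeight_pos d).le]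

/-- This makes `p ^ 3 * (q + 3 / 5 * q') ^ 4` a potential that does not increase when a digit is
appended; `p ^ 3 * q ^ 4` is not one. -/
theorem kaufmanWeight_pow_mul_le (d : Fin 3) {q q' : ℝ} (hq' : 0 ≤ q') (hle : q' ≤ q)
    (hq : q ≤ 4 * q') :
    kaufmanWeight d ^ 3 * ((d + 1) * q + q' + 3 / 5 * q) ^ 4 ≤ (q + 3 / 5 * q') ^ 4 := by
  have of_le_mul {ρ : ℝ} (hρ : (d + 1) * q + q' + 3 / 5 * q ≤ ρ * (q + 3 / 5 * q'))
      (hweight : kaufmanWeight d ^ 3 * ρ ^ 4 ≤ 1) :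
      kaufmanWeight d ^ 3 * ((d + 1) * q + q' + 3 / 5 * q) ^ 4 ≤ (q + 3 / 5 * q') ^ 4 := by
    have hq0 : 0 ≤ q := hq'.trans hle
    have hweight0 := kaufmanWeight_pos d
    calc kaufmanWeight d ^ 3 * ((d + 1) * q + q' + 3 / 5 * q) ^ 4
        ≤ kaufmanWeight d ^ 3 * (ρ * (q + 3 / 5 * q')) ^ 4 := by gcongr
      _ = kaufmanWeight d ^ 3 * ρ ^ 4 * (q + 3 / 5 * q') ^ 4 := by ring
      _ ≤ (q + 3 / 5 * q') ^ 4 := mul_le_of_le_one_left (by positivity) hweight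
  fin_cases d
  · exact of_le_mul (ρ := 13 / 8) (by norm_num; linarith) (by norm_num [kaufmanWeight])
  · exact of_le_mul (ρ := 57 / 23) (by norm_num; linarith) (by norm_num [kaufmanWeight])
  · exact of_le_mul (ρ := 77 / 23) (by norm_num; linarith) (by norm_num [kaufmanWeight])

namespace DigitWord

theorem prob_kaufmanLaw_cons_pow_mul_le (d : Fin 3) (w : DigitWord 3) :
    prob kaufmanLaw (d :: w) ^ 3 * (den (d :: w) + 3 / 5 * prevDen (d :: w)) ^ 4 ≤ 2 := by
  induction w generalizing d with
  | nil =>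
    rw [prob_cons, prob_nil, kaufmanLaw_real_singleton]
    fin_cases d <;> norm_num [kaufmanWeight, den, prevDen]
  | cons e w ih =>
    have hle : (prevDen (e :: w) : ℝ) ≤ den (e :: w) := Nat.cast_le.2 (prevDen_le_den _)
    have hden : (den (e :: w) : ℝ) ≤ 4 * prevDen (e :: w) := by exact_mod_cast den_cons_le e w
    calc prob kaufmanLaw (d :: e :: w) ^ 3 *
          (den (d :: e :: w) + 3 / 5 * prevDen (d :: e :: w)) ^ 4
        = prob kaufmanLaw (e :: w) ^ 3 * (kaufmanWeight d ^ 3 *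
            ((d + 1) * den (e :: w) + prevDen (e :: w) + 3 / 5 * den (e :: w)) ^ 4) := by
          rw [prob_cons, kaufmanLaw_real_singleton,
            show den (d :: e :: w) = (d + 1) * den (e :: w) + prevDen (e :: w) from rfl,
            show prevDen (d :: e :: w) = den (e :: w) from rfl]
          push_cast
          ring
      _ ≤ prob kaufmanLaw (e :: w) ^ 3 * (den (e :: w) + 3 / 5 * prevDen (e :: w)) ^ 4 :=
          mul_le_mul_of_nonneg_left (kaufmanWeight_pow_mul_le d (Nat.cast_nonneg _) hle hden)
            (pow_nonneg (prob_nonneg _ _) 3)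
      _ ≤ 2 := ih e

theorem prob_kaufmanLaw_pow_mul_le (w : DigitWord 3) :
    prob kaufmanLaw w ^ 3 * (den w : ℝ) ^ 4 ≤ 2 := by
  cases w with
  | nil => norm_num [prob_nil, den]
  | cons d w =>
    have := prob_nonneg kaufmanLaw (d :: w)
    refine le_trans ?_ (prob_kaufmanLaw_cons_pow_mul_le d w)
    gcongr
    exact le_add_of_nonneg_right (by positivity)

theorem prob_kaufmanLaw_le (w : DigitWord 3) :
    prob kaufmanLaw w ≤ 2 * (den w : ℝ) ^ (-(2 * (2 / 3)) : ℝ) := by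
  have hden : (0 : ℝ) < den w := Nat.cast_pos.2 (one_le_den w)
  have hcube : ((den w : ℝ) ^ (-(2 * (2 / 3)) : ℝ)) ^ 3 = ((den w : ℝ) ^ 4)⁻¹ := by
    rw [← Real.rpow_natCast, ← Real.rpow_mul hden.le, ← Real.rpow_natCast, ← Real.rpow_neg hden.le]
    norm_num
  refine le_of_pow_le_pow_left₀ three_ne_zero (by positivity) ?_
  rw [mul_pow, hcube, ← div_eq_mul_inv, le_div_iff₀ (by positivity)]
  exact (prob_kaufmanLaw_pow_mul_le w).trans (by norm_num)

end DigitWord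

/-- **Kaufman**: for every `N ≥ 3`, the set `F(N)` of irrationals in `(0,1)` all of whose
partial quotients are at most `N` carries a Borel probability measure `μ` with power decay of
its Fourier transform: `|μ̂(t)| ≤ c |t|^{-η}` for `|t| ≥ 1`. -/
theorem kaufman_measure (N : ℕ) (hN : 3 ≤ N) :
    ∃ μ : Measure ℝ, IsProbabilityMeasure μ ∧
      μ {x : ℝ | x ∈ Set.Ioo (0 : ℝ) 1 ∧ Irrational x ∧ ∀ i : ℕ, cfa i x ≤ N} = 1 ∧
      ∃ c : ℝ, 0 < c ∧ ∃ η : ℝ, 0 < η ∧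
        ∀ t : ℝ, 1 ≤ |t| →
          ‖∫ x, Complex.exp (-(2 * Real.pi * t * x) * Complex.I) ∂μ‖ ≤ c * |t| ^ (-η) := by
  obtain ⟨c, hc, hdecay⟩ := DigitWord.exists_norm_charFun_cfMeasure_le DigitWord.prob_kaufmanLaw_le
  refine ⟨cfMeasure kaufmanLaw, inferInstance, cfMeasure_bounded_type kaufmanLaw hN, c, hc,
    1 / 136, by norm_num, fun t ht => ?_⟩
  have hscale : |t| ≤ |-(2 * Real.pi * t)| := by
    rw [abs_neg, abs_mul, abs_of_pos Real.two_pi_pos]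
    exact le_mul_of_one_le_left (abs_nonneg t) (by linarith [Real.pi_gt_three])
  calc ‖∫ x, Complex.exp (-(2 * Real.pi * t * x) * Complex.I) ∂cfMeasure kaufmanLaw‖
      = ‖charFun (cfMeasure kaufmanLaw) (-(2 * Real.pi * t))‖ := by
        rw [charFun_apply_real]
        push_cast
        simp only [neg_mul]
    _ ≤ c * |-(2 * Real.pi * t)| ^ (-(1 / 136) : ℝ) := hdecay _ (ht.trans hscale)
    _ ≤ c * |t| ^ (-(1 / 136) : ℝ) := mul_le_mul_of_nonneg_left
        (Real.rpow_le_rpow_of_nonpos (by linarith) hscale (by norm_num)) hc.le
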